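/- Let f ∈ BV(X). Then there exists a sequence of Lipschitz functions f_k : X → ℝ with f_k → f in L¹_loc(X) such that lim_{k→∞} ∫_X lip f_k dμ = V(f,X), and moreover for every open set U ⊆ X, V(f,U) ≤ liminf_{k→∞} ∫_U lip f_k dμ, and for every closed set F ⊆ X, limsup_{k→∞} ∫_F lip f_k dμ ≤ V(f,F) (that is, the measures (lip f_k)·μ converge weakly* to the variation measure of f). -/

import Mathlib

open MeasureTheory Metric Filter Set Topology
open scoped NNReal ENNReal

noncomputable section

universe u

/-- The measure `μ` is doubling with constant `Cd`:
`0 < μ(B(x,2r)) ≤ Cd·μ(B(x,r)) < ∞` for every `x` and every `r > 0`. -/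
def IsDoublingWith {X : Type u} [PseudoMetricSpace X] [MeasurableSpace X]
    (μ : Measure X) (Cd : ℝ≥0) : Prop :=
  ∀ (x : X) (r : ℝ), 0 < r →
    0 < μ (ball x (2 * r)) ∧
      μ (ball x (2 * r)) ≤ (Cd : ℝ≥0∞) * μ (ball x r) ∧
      (Cd : ℝ≥0∞) * μ (ball x r) < ⊤

/-- `X` is a geodesic space: any two points are joined by a unit-speed geodesic. -/
def IsGeodesic (X : Type u) [PseudoMetricSpace X] : Prop :=
  ∀ x y : X, ∃ γ : ℝ → X,
    LipschitzOnWith 1 γ (Icc 0 (dist x y)) ∧ γ 0 = x ∧ γ (dist x y) = y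

/-- `g` is an upper gradient of `u`: for every `L ≥ 0` and every `1`-Lipschitz curve
`γ : [0,L] → X`, `|u(γ 0) − u(γ L)| ≤ ∫₀^L g(γ t) dt`. -/
def IsUpperGradientOf {X : Type u} [PseudoMetricSpace X] (g u : X → ℝ) : Prop :=
  ∀ L : ℝ, 0 ≤ L → ∀ γ : ℝ → X, LipschitzOnWith 1 γ (Icc 0 L) →
    |u (γ 0) - u (γ L)| ≤ ∫ t in (0:ℝ)..L, g (γ t)

/-- The lower pointwise Lipschitz constant
`lip u (x) = liminf_{r→0} r⁻¹ sup_{y ∈ B(x,r)} |u y − u x|`. -/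
def lipConst {X : Type u} [PseudoMetricSpace X] (u : X → ℝ) (x : X) : ℝ≥0∞ :=
  Filter.liminf
    (fun r : ℝ => ⨆ y ∈ ball x r, ENNReal.ofReal (|u y - u x| / r)) (𝓝[>] (0:ℝ))

/-- `u` is locally Lipschitz on `W`: Lipschitz on every closed bounded subset of `W`. -/
def LocallyLipschitzOnSet {X : Type u} [PseudoMetricSpace X] (u : X → ℝ) (W : Set X) : Prop :=
  ∀ K : Set X, IsClosed K → Bornology.IsBounded K → K ⊆ W →
    ∃ L : ℝ≥0, LipschitzOnWith L u K

/-- `u i → f` in `L¹_loc(W)`. -/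
def TendstoL1loc {X : Type u} [PseudoMetricSpace X] [MeasurableSpace X]
    (μ : Measure X) (u : ℕ → X → ℝ) (f : X → ℝ) (W : Set X) : Prop :=
  ∀ K : Set X, IsClosed K → Bornology.IsBounded K → K ⊆ W →
    Tendsto (fun i => ∫⁻ x in K, ENNReal.ofReal |u i x - f x| ∂μ) atTop (𝓝 0)

/-- Total variation `V(f,W)` of `f` on an open set `W`:
the infimum over sequences of locally Lipschitz functions converging to `f` in `L¹_loc(W)`
of the liminf of `∫_W lip u_i dμ`. -/
def totVarOn {X : Type u} [PseudoMetricSpace X] [MeasurableSpace X]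
    (μ : Measure X) (f : X → ℝ) (W : Set X) : ℝ≥0∞ :=
  ⨅ (us : ℕ → X → ℝ) (_ : ∀ i, LocallyLipschitzOnSet (us i) W)
    (_ : TendstoL1loc μ us f W),
    Filter.liminf (fun i => ∫⁻ x in W, lipConst (us i) x ∂μ) atTop

/-- Total variation `V(f,A)` of `f` on an arbitrary set `A`:
infimum of `V(f,W)` over open `W ⊇ A`. -/
def totVarSet {X : Type u} [PseudoMetricSpace X] [MeasurableSpace X]
    (μ : Measure X) (f : X → ℝ) (A : Set X) : ℝ≥0∞ :=
  ⨅ (W : Set X) (_ : IsOpen W) (_ : A ⊆ W), totVarOn μ f W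

/-- `f` is of bounded variation: locally integrable and `V(f,X) < ∞`. -/
def IsBV {X : Type u} [MetricSpace X] [MeasurableSpace X]
    (μ : Measure X) (f : X → ℝ) : Prop :=
  LocallyIntegrable f μ ∧ totVarOn μ f Set.univ < ⊤

/-- `(X,d,μ)` supports a `1`-Poincaré inequality with constant `CP`. -/
def SupportsPoincare {X : Type u} [MetricSpace X] [MeasurableSpace X]
    (μ : Measure X) (CP : ℝ) : Prop :=
  ∀ u : X → ℝ, LocallyLipschitzOnSet u Set.univ →
    ∀ g : X → ℝ, (∀ x, 0 ≤ g x) → Measurable g → IsUpperGradientOf g u →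
      ∀ (x : X) (r : ℝ), 0 < r →
        (⨍ y in ball x r, |u y - (⨍ z in ball x r, u z ∂μ)| ∂μ) ≤
          CP * r * (⨍ y in ball x r, g y ∂μ)

/-- Standing assumptions: a complete geodesic metric measure space with at least two
points, whose measure is doubling and supports a 1-Poincaré inequality. -/
def GoodSpace (X : Type u) [MetricSpace X] [MeasurableSpace X]
    (μ : Measure X) (Cd : ℝ≥0) (CP : ℝ) : Prop :=
  Nontrivial X ∧ CompleteSpace X ∧ IsGeodesic X ∧
    IsDoublingWith μ Cd ∧ SupportsPoincare μ CP

/-- The codimension-1 Hausdorff measure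
`𝓗(A) = sup_{δ>0} inf { Σ μ(B_i)/r_i : 0 < r_i ≤ δ, A ⊆ ⋃ B_i }`,
the infimum over countable coverings of `A` by balls (balls of nonpositive radius
are empty and contribute `0`). -/
def codimOneH {X : Type u} [PseudoMetricSpace X] [MeasurableSpace X]
    (μ : Measure X) (A : Set X) : ℝ≥0∞ :=
  ⨆ (δ : ℝ) (_ : 0 < δ),
    ⨅ (c : ℕ → X) (r : ℕ → ℝ) (_ : ∀ i, r i ≤ δ)
      (_ : A ⊆ ⋃ i, ball (c i) (r i)),
      ∑' i, if 0 < r i then μ (ball (c i) (r i)) / ENNReal.ofReal (r i) else 0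

/-- The measure theoretic boundary `∂*E`. -/
def measBdry {X : Type u} [PseudoMetricSpace X] [MeasurableSpace X]
    (μ : Measure X) (E : Set X) : Set X :=
  {x : X |
    0 < Filter.limsup (fun r : ℝ => μ (E ∩ ball x r) / μ (ball x r)) (𝓝[>] (0:ℝ)) ∧
    0 < Filter.limsup (fun r : ℝ => μ (Eᶜ ∩ ball x r) / μ (ball x r)) (𝓝[>] (0:ℝ))}

/-- `A` has density `0` at `x`. -/
def DensityZeroAt {X : Type u} [PseudoMetricSpace X] [MeasurableSpace X]
    (μ : Measure X) (A : Set X) (x : X) : Prop :=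
  Tendsto (fun r : ℝ => μ (A ∩ ball x r) / μ (ball x r)) (𝓝[>] (0:ℝ)) (𝓝 0)

/-- `A` has density `1` at `x`. -/
def DensityOneAt {X : Type u} [PseudoMetricSpace X] [MeasurableSpace X]
    (μ : Measure X) (A : Set X) (x : X) : Prop :=
  Tendsto (fun r : ℝ => μ (A ∩ ball x r) / μ (ball x r)) (𝓝[>] (0:ℝ)) (𝓝 1)

/-- `x` is a Lebesgue point of `u`. -/
def LebesguePointOf {X : Type u} [MetricSpace X] [MeasurableSpace X]
    (μ : Measure X) (u : X → ℝ) (x : X) : Prop :=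
  Tendsto (fun r : ℝ => ⨍ y in ball x r, |u y - u x| ∂μ) (𝓝[>] (0:ℝ)) (𝓝 0)

/-- `u` is a Borel representative whose value at each Lebesgue point equals the limit
of its ball averages. -/
def PreciseRep {X : Type u} [MetricSpace X] [MeasurableSpace X]
    (μ : Measure X) (u : X → ℝ) : Prop :=
  Measurable u ∧ ∀ (x : X) (c : ℝ),
    Tendsto (fun r : ℝ => ⨍ y in ball x r, u y ∂μ) (𝓝[>] (0:ℝ)) (𝓝 c) → u x = c

/-- The restricted maximal function `M_R ν (x) = sup_{0<r≤R} ν(B(x,r))/μ(B(x,r))`. -/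
def restrMaximal {X : Type u} [PseudoMetricSpace X] [MeasurableSpace X]
    (μ ν : Measure X) (R : ℝ) (x : X) : ℝ≥0∞ :=
  ⨆ (r : ℝ) (_ : 0 < r) (_ : r ≤ R), ν (ball x r) / μ (ball x r)

/-- `F_g(x,y)`: the infimum of `∫_γ g ds` over 1-Lipschitz curves `γ : [0,L] → Z`
joining `x` to `y` (the infimum over the empty set is `∞`). -/
def curveInf {Z : Type u} [PseudoMetricSpace Z] (g : Z → ℝ) (x y : Z) : ℝ≥0∞ :=
  ⨅ (L : ℝ) (_ : 0 ≤ L) (γ : ℝ → Z) (_ : LipschitzOnWith 1 γ (Icc 0 L))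
    (_ : γ 0 = x) (_ : γ L = y),
    ∫⁻ t in Icc (0:ℝ) L, ENNReal.ofReal (g (γ t))

/-- Weak-star convergence of measures: test against continuous, compactly
supported functions. -/
def WeakStar {Z : Type u} [MetricSpace Z] [MeasurableSpace Z]
    (ν : ℕ → Measure Z) (m : Measure Z) : Prop :=
  ∀ φ : Z → ℝ, Continuous φ → HasCompactSupport φ →
    Tendsto (fun n => ∫ x, φ x ∂(ν n)) atTop (𝓝 (∫ x, φ x ∂m))

/-- `φ ∈ BV_c(U)`: a BV function whose support is compact and contained in `U`. -/
def MemBVc {X : Type u} [MetricSpace X] [MeasurableSpace X]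
    (μ : Measure X) (φ : X → ℝ) (U : Set X) : Prop :=
  IsBV μ φ ∧ IsCompact (tsupport φ) ∧ tsupport φ ⊆ U

/-!
Fix `x₀` and `R = 2 ^ k`. A locally Lipschitz competitor for `V(f, B(x₀, 2R))` is nearly optimal on
that ball but uncontrolled beyond it. Outside `B(x₀, R)` the average of `f` over tents of radius
`d(x, x₀) / 8` takes over: by doubling and the Poincaré inequality its pointwise Lipschitz constant
is bounded for `d(x, x₀) ≥ 1`, and both the integral of that constant outside `B(x₀, R)` and
`1 / R` times the `L¹` distance to `f` on `R ≤ d(x, x₀) < 2R` are controlled by the variation of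
`f` on the dyadic annuli from the `k`-th one on. That quantity is a tail of a convergent series,
as the annuli overlap boundedly.

Two functions cannot be glued by a partition of unity, since `lip`, a lower limit, satisfies no
Leibniz rule. Instead, to pass from `u` to `v` one truncates `u` to the interval `[v - ψ, v + ψ]`,
where `ψ` is a steep ramp vanishing on the side of `v`. The glued function coincides locally with
`u`, `v` or `v ± ψ`, and the slope of `ψ` is paid only where `|u - v| ≥ ψ`, a set whose average
measure over the possible starting levels of the ramp is at most a multiple of `‖u - v‖₁` divided
by the slope. The glued function is globally Lipschitz because a geodesic space turns a bound for
`lip` into a Lipschitz bound.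

The same gluing yields `V(f, X) ≤ V(f, W) + V(f, Kᶜ)` for `K` compact in the open set `W`. Lower
semicontinuity on `Kᶜ` and convergence of the total energies then bound the upper limit of the
energy on `K` by `V(f, W)`. Closed sets reduce to compact ones because no energy escapes to
infinity: the energy of the `k`-th function is at most `V(f, B(x₀, 2R))` up to `o(1)`.
-/

section LipConst

variable {X : Type u} [PseudoMetricSpace X] {u h : X → ℝ} {x y : X} {K r q δ : ℝ}

/-- The oscillation of `u` on the ball `B(x,r)` around its value at the centre, divided by `r`.
The pointwise Lipschitz constant `lipConst u x` is the lower limit of `oscQuotient u r x` as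
`r → 0`. -/
def oscQuotient (u : X → ℝ) (r : ℝ) (x : X) : ℝ≥0∞ :=
  ⨆ y ∈ ball x r, ENNReal.ofReal (|u y - u x| / r)

theorem le_oscQuotient (u : X → ℝ) (hy : y ∈ ball x r) :
    ENNReal.ofReal (|u y - u x| / r) ≤ oscQuotient u r x :=
  le_iSup₂ (f := fun y (_ : y ∈ ball x r) => ENNReal.ofReal (|u y - u x| / r)) y hy

theorem oscQuotient_le_ofReal_div_mul (u : X → ℝ) (x : X) (hq : 0 < q) (hqr : q ≤ r) :
    oscQuotient u q x ≤ ENNReal.ofReal (r / q) * oscQuotient u r x := by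
  have hr : 0 < r := hq.trans_le hqr
  refine iSup₂_le fun y hy => ?_
  calc ENNReal.ofReal (|u y - u x| / q)
      = ENNReal.ofReal (r / q) * ENNReal.ofReal (|u y - u x| / r) := by
        rw [← ENNReal.ofReal_mul (by positivity)]
        congr 1
        field_simp
    _ ≤ _ := by gcongr; exact le_oscQuotient u (ball_subset_ball hqr hy)

theorem lipConst_le_add (hK : 0 ≤ K)
    (hh : ∀ᶠ y in 𝓝 x, |h y - h x| ≤ |u y - u x| + K * dist y x) :
    lipConst h x ≤ lipConst u x + ENNReal.ofReal K := by
  obtain ⟨ε, hε, hball⟩ := Metric.eventually_nhds_iff_ball.1 hh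
  unfold lipConst
  rw [← liminf_add_const (R := ℝ≥0∞) _ _ _ (by isBoundedDefault) (by isBoundedDefault)]
  refine liminf_le_liminf ?_
  filter_upwards [Ioo_mem_nhdsGT hε] with r ⟨hr0, hrε⟩
  refine iSup₂_le fun y hy => ?_
  calc ENNReal.ofReal (|h y - h x| / r)
      ≤ ENNReal.ofReal (|u y - u x| / r + K) := by
        apply ENNReal.ofReal_le_ofReal
        rw [div_add' _ _ _ hr0.ne']
        gcongr
        refine (hball y (ball_subset_ball hrε.le hy)).trans ?_
        gcongr
        exact (mem_ball.1 hy).le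
    _ ≤ ENNReal.ofReal (|u y - u x| / r) + ENNReal.ofReal K := ENNReal.ofReal_add_le
    _ ≤ _ := by gcongr; exact le_oscQuotient u hy

theorem lipConst_congr_of_eventuallyEq (hh : h =ᶠ[𝓝 x] u) : lipConst h x = lipConst u x := by
  have lipConst_le {v w : X → ℝ} (hvw : v =ᶠ[𝓝 x] w) : lipConst v x ≤ lipConst w x := by
    have := lipConst_le_add (u := w) (h := v) (x := x) le_rfl (by
      filter_upwards [hvw] with y hy
      rw [hy, hvw.eq_of_nhds, zero_mul, add_zero])
    simpa only [ENNReal.ofReal_zero, add_zero] using this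
  exact le_antisymm (lipConst_le hh) (lipConst_le hh.symm)

theorem lipConst_le_of_eventually (hK : 0 ≤ K)
    (hh : ∀ᶠ y in 𝓝 x, |h y - h x| ≤ K * dist y x) : lipConst h x ≤ ENNReal.ofReal K := by
  have h0 : lipConst (fun _ : X => (0 : ℝ)) x = 0 := by simp [lipConst]
  simpa only [h0, zero_add] using
    lipConst_le_add (u := fun _ => (0 : ℝ)) (h := h) (x := x) hK (by simpa using hh)

theorem lipConst_le_of_lipschitzOnWith {L : ℝ≥0} {s : Set X} (hs : s ∈ 𝓝 x)
    (hu : LipschitzOnWith L u s) : lipConst u x ≤ L := by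
  rw [← ENNReal.ofReal_coe_nnreal]
  refine lipConst_le_of_eventually L.2 ?_
  filter_upwards [hs] with y hy
  simpa only [Real.dist_eq] using hu.dist_le_mul y hy x (mem_of_mem_nhds hs)

theorem lowerSemicontinuous_oscQuotient (hu : Continuous u) (r : ℝ) :
    LowerSemicontinuous (oscQuotient u r) := by
  intro x a ha
  simp only [oscQuotient, lt_iSup_iff] at ha
  obtain ⟨y, hy, hya⟩ := ha
  have hy_mem : ∀ᶠ z in 𝓝 x, y ∈ ball z r :=
    (by fun_prop : Continuous fun z => dist y z).continuousAt.eventually_lt_const (mem_ball.1 hy)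
  have hy_lt : ∀ᶠ z in 𝓝 x, a < ENNReal.ofReal (|u y - u z| / r) :=
    (ENNReal.continuous_ofReal.comp (by fun_prop)).continuousAt.eventually_const_lt hya
  filter_upwards [hy_mem, hy_lt] with z hz hlt
  exact hlt.trans_le (le_oscQuotient u hz)

theorem iInf_rat_oscQuotient_le (u : X → ℝ) (x : X) (hr : r ∈ Ioo 0 δ) :
    ⨅ q : ℚ, ⨅ _ : (q : ℝ) ∈ Ioo 0 δ, oscQuotient u q x ≤ oscQuotient u r x := by
  obtain ⟨q, -, hqr, hq⟩ := Real.exists_seq_rat_strictMono_tendsto r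
  obtain htop | htop := eq_or_ne (oscQuotient u r x) ⊤
  · exact htop ▸ le_top
  have hdiv : Tendsto (fun k => r / (q k : ℝ)) atTop (𝓝 1) := by
    simpa only [div_self hr.1.ne'] using! (tendsto_const_nhds (x := r)).div hq hr.1.ne'
  have hlim : Tendsto (fun k => ENNReal.ofReal (r / q k) * oscQuotient u r x) atTop
      (𝓝 (oscQuotient u r x)) := by
    simpa only [ENNReal.ofReal_one, one_mul] using
      ENNReal.Tendsto.mul_const (ENNReal.tendsto_ofReal hdiv) (Or.inr htop)
  refine ge_of_tendsto hlim ?_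
  filter_upwards [hq.eventually_const_lt hr.1] with k hk
  exact (iInf₂_le (q k) ⟨hk, (hqr k).trans hr.2⟩).trans
    (oscQuotient_le_ofReal_div_mul u x hk (hqr k).le)

theorem lipConst_eq_iSup_iInf_rat (u : X → ℝ) (x : X) :
    lipConst u x =
      ⨆ n : ℕ, ⨅ q : ℚ, ⨅ _ : (q : ℝ) ∈ Ioo 0 (1 / ((n : ℝ) + 1)), oscQuotient u q x := by
  have hbasis : (𝓝[>] (0 : ℝ)).HasBasis (fun _ : ℕ => True) fun n => Ioo 0 (1 / ((n : ℝ) + 1)) := by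
    refine (nhdsGT_basis (0 : ℝ)).to_hasBasis (fun ε hε => ?_) fun n _ =>
      ⟨1 / ((n : ℝ) + 1), by positivity, le_rfl⟩
    obtain ⟨n, hn⟩ := exists_nat_one_div_lt hε
    exact ⟨n, trivial, Ioo_subset_Ioo_right hn.le⟩
  unfold lipConst
  rw [hbasis.liminf_eq_iSup_iInf]
  simp only [iSup_true]
  exact iSup_congr fun n => le_antisymm (le_iInf₂ fun q hq => iInf₂_le (q : ℝ) hq)
    (le_iInf₂ fun r hr => iInf_rat_oscQuotient_le u x hr)

theorem measurable_lipConst [MeasurableSpace X] [BorelSpace X] (hu : Continuous u) :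
    Measurable (lipConst u) := by
  rw [funext (lipConst_eq_iSup_iInf_rat u)]
  exact .iSup fun n => .iInf fun q => .iInf fun _ =>
    (lowerSemicontinuous_oscQuotient hu q).measurable

end LipConst

section LocallyLipschitz

variable {X : Type u} [PseudoMetricSpace X] {u : X → ℝ} {W W' : Set X}

namespace LocallyLipschitzOnSet

theorem of_lipschitzWith {L : ℝ≥0} (hu : LipschitzWith L u) (W : Set X) :
    LocallyLipschitzOnSet u W :=
  fun _ _ _ _ => ⟨L, hu.lipschitzOnWith⟩

theorem mono (hu : LocallyLipschitzOnSet u W) (h : W' ⊆ W) : LocallyLipschitzOnSet u W' :=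
  fun K hK hKb hKW => hu K hK hKb (hKW.trans h)

theorem exists_mem_nhds (hu : LocallyLipschitzOnSet u W) (hW : IsOpen W) {x : X} (hx : x ∈ W) :
    ∃ L : ℝ≥0, ∃ s ∈ 𝓝 x, LipschitzOnWith L u s := by
  obtain ⟨r, hr, hrW⟩ := nhds_basis_closedBall.mem_iff.1 (hW.mem_nhds hx)
  obtain ⟨L, hL⟩ := hu _ isClosed_closedBall isBounded_closedBall hrW
  exact ⟨L, _, closedBall_mem_nhds x hr, hL⟩

theorem continuousAt (hu : LocallyLipschitzOnSet u W) (hW : IsOpen W) {x : X} (hx : x ∈ W) :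
    ContinuousAt u x := by
  obtain ⟨L, s, hs, hL⟩ := hu.exists_mem_nhds hW hx
  exact hL.continuousOn.continuousAt hs

theorem continuousOn (hu : LocallyLipschitzOnSet u W) (hW : IsOpen W) : ContinuousOn u W :=
  fun _ hx => (hu.continuousAt hW hx).continuousWithinAt

theorem continuous (hu : LocallyLipschitzOnSet u univ) : Continuous u :=
  continuousOn_univ.1 (hu.continuousOn isOpen_univ)

theorem of_exists_mem_nhds [ProperSpace X]
    (h : ∀ x ∈ W, ∃ L : ℝ≥0, ∃ s ∈ 𝓝 x, LipschitzOnWith L u s) : LocallyLipschitzOnSet u W := by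
  intro K hK hKb hKW
  refine LocallyLipschitzOn.exists_lipschitzOnWith_of_compact
    (isCompact_of_isClosed_isBounded hK hKb) fun x hx => ?_
  obtain ⟨L, s, hs, hL⟩ := h x (hKW hx)
  exact ⟨L, s, mem_nhdsWithin_of_mem_nhds hs, hL⟩

end LocallyLipschitzOnSet

end LocallyLipschitz

section UpperGradient

variable {X : Type u} [PseudoMetricSpace X] {u : X → ℝ} {γ : ℝ → X} {L : ℝ}

theorem ofReal_abs_deriv_le_lipConst (hγ : LipschitzWith 1 γ) {t D : ℝ}
    (hD : HasDerivAt (fun s => u (γ s)) D t) : ENNReal.ofReal |D| ≤ lipConst u (γ t) := by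
  have hs : Tendsto (fun r : ℝ => r * (1 - r)) (𝓝[>] 0) (𝓝[>] 0) := by
    refine tendsto_nhdsWithin_iff.2 ⟨?_, ?_⟩
    · exact (Continuous.tendsto' (by fun_prop) _ _ (by simp)).mono_left nhdsWithin_le_nhds
    · filter_upwards [Ioo_mem_nhdsGT one_pos] with r hr using mul_pos hr.1 (sub_pos.2 hr.2)
  have hslope : Tendsto (fun r : ℝ => |(r * (1 - r))⁻¹ * (u (γ (t + r * (1 - r))) - u (γ t))|
      * (1 - r)) (𝓝[>] 0) (𝓝 |D|) := by
    have h1 : Tendsto (fun r : ℝ => 1 - r) (𝓝[>] 0) (𝓝 1) :=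
      (Continuous.tendsto' (by fun_prop) _ _ (by simp)).mono_left nhdsWithin_le_nhds
    simpa only [mul_one, Function.comp_def, smul_eq_mul] using
      (hD.tendsto_slope_zero_right.comp hs).abs.mul h1
  refine (ENNReal.tendsto_ofReal hslope).liminf_eq.ge.trans (liminf_le_liminf ?_)
  filter_upwards [Ioo_mem_nhdsGT one_pos] with r ⟨hr0, hr1⟩
  have : 0 < 1 - r := sub_pos.2 hr1
  have hmem : γ (t + r * (1 - r)) ∈ ball (γ t) r := by
    refine mem_ball.2 ((hγ.dist_le_mul _ _).trans_lt ?_)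
    rw [NNReal.coe_one, one_mul, Real.dist_eq, add_sub_cancel_left, abs_of_pos (by positivity)]
    nlinarith
  refine (le_of_eq ?_).trans (le_oscQuotient u hmem)
  rw [abs_mul, abs_of_pos (by positivity)]
  congr 1
  field_simp

theorem abs_sub_le_integral_lipConst (hu : LocallyLipschitzOnSet u univ)
    (hγ : LipschitzWith 1 γ) (hL : 0 ≤ L) :
    |u (γ 0) - u (γ L)| ≤ ∫ t in (0 : ℝ)..L, (lipConst u (γ t)).toReal := by
  borelize X
  obtain ⟨M, hM⟩ := hu (closedBall (γ 0) (L + 1)) isClosed_closedBall isBounded_closedBall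
    (subset_univ _)
  have hγL : ∀ t ∈ uIcc 0 L, ball (γ t) 1 ⊆ closedBall (γ 0) (L + 1) := fun t ht => by
    rw [uIcc_of_le hL] at ht
    refine ball_subset_closedBall.trans (closedBall_subset_closedBall' ?_)
    have := hγ.dist_le_mul t 0
    simp only [NNReal.coe_one, one_mul, Real.dist_eq, sub_zero, abs_of_nonneg ht.1] at this
    linarith [ht.2]
  have hlip : ∀ t ∈ uIcc 0 L, lipConst u (γ t) ≤ M := fun t ht =>
    lipConst_le_of_lipschitzOnWith (mem_of_superset (ball_mem_nhds _ one_pos) (hγL t ht)) hM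
  have hφ : LipschitzOnWith (M * 1) (u ∘ γ) (uIcc 0 L) :=
    hM.comp hγ.lipschitzOnWith fun t ht => hγL t ht (mem_ball_self one_pos)
  have hac := hφ.absolutelyContinuousOnInterval
  have hInt : IntervalIntegrable (fun t => (lipConst u (γ t)).toReal) volume 0 L := by
    refine (intervalIntegrable_const (c := (M : ℝ))).mono_fun
      ((measurable_lipConst hu.continuous).comp
        hγ.continuous.measurable).ennreal_toReal.aestronglyMeasurable ?_
    filter_upwards [ae_restrict_mem measurableSet_uIoc] with t ht
    simpa [abs_of_nonneg ENNReal.toReal_nonneg] using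
      ENNReal.toReal_mono ENNReal.coe_ne_top (hlip t (uIoc_subset_uIcc ht))
  calc |u (γ 0) - u (γ L)| = |∫ t in (0 : ℝ)..L, deriv (u ∘ γ) t| := by
        rw [hac.integral_deriv_eq_sub, abs_sub_comm]; rfl
    _ ≤ ∫ t in (0 : ℝ)..L, |deriv (u ∘ γ) t| :=
        intervalIntegral.abs_integral_le_integral_abs hL
    _ ≤ ∫ t in (0 : ℝ)..L, (lipConst u (γ t)).toReal := by
        refine intervalIntegral.integral_mono_on_of_le_Ioo hL hac.intervalIntegrable_deriv.abs
          hInt fun t ht => ?_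
        by_cases hd : DifferentiableAt ℝ (u ∘ γ) t
        · refine (ENNReal.ofReal_le_iff_le_toReal (ne_top_of_le_ne_top ENNReal.coe_ne_top
            (hlip t ?_))).1 (ofReal_abs_deriv_le_lipConst hγ hd.hasDerivAt)
          exact uIcc_of_le hL ▸ Ioo_subset_Icc_self ht
        · simp [deriv_zero_of_not_differentiableAt hd]

theorem isUpperGradientOf_lipConst (hu : LocallyLipschitzOnSet u univ) :
    IsUpperGradientOf (fun x => (lipConst u x).toReal) u := by
  intro L hL γ hγ
  have hext : LipschitzWith 1 (IccExtend hL ((Icc 0 L).domRestrict γ)) := by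
    simpa only [mul_one] using! hγ.to_restrict.comp (LipschitzWith.projIcc hL)
  have heq : ∀ t ∈ Icc 0 L, IccExtend hL ((Icc 0 L).domRestrict γ) t = γ t :=
    fun t ht => IccExtend_of_mem hL _ ht
  have hmain := abs_sub_le_integral_lipConst hu hext hL
  rw [heq 0 (left_mem_Icc.2 hL), heq L (right_mem_Icc.2 hL)] at hmain
  refine hmain.trans_eq (intervalIntegral.integral_congr fun t ht => ?_)
  simp only [heq t (uIcc_of_le hL ▸ ht)]

theorem IsGeodesic.lipschitzWith_of_lipConst_le (hX : IsGeodesic X)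
    (hu : LocallyLipschitzOnSet u univ) {L : ℝ≥0} (hL : ∀ x, lipConst u x ≤ L) :
    LipschitzWith L u := by
  refine LipschitzWith.of_dist_le_mul fun x y => ?_
  obtain ⟨γ, hγ, hγx, hγy⟩ := hX x y
  have hgrad := isUpperGradientOf_lipConst hu _ dist_nonneg γ hγ
  rw [hγx, hγy, ← Real.dist_eq] at hgrad
  have hbound := intervalIntegral.norm_integral_le_of_norm_le_const (a := 0) (b := dist x y)
    (f := fun t => (lipConst u (γ t)).toReal) (C := L) fun t _ => by
      simpa [abs_of_nonneg ENNReal.toReal_nonneg] using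
        ENNReal.toReal_mono ENNReal.coe_ne_top (hL (γ t))
  rw [sub_zero, abs_of_nonneg dist_nonneg] at hbound
  exact hgrad.trans ((le_abs_self _).trans hbound)

end UpperGradient

namespace IsDoublingWith

variable {X : Type u} [PseudoMetricSpace X] [MeasurableSpace X] {μ : Measure X} {Cd : ℝ≥0}
  {A : Set X} {x y : X} {r R ε : ℝ}

theorem measure_ball_pos (h : IsDoublingWith μ Cd) (x : X) (hr : 0 < r) : 0 < μ (ball x r) := by
  simpa [mul_div_cancel₀] using (h x (r / 2) (by positivity)).1

theorem measure_ball_lt_top (h : IsDoublingWith μ Cd) (x : X) (r : ℝ) : μ (ball x r) < ⊤ := by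
  obtain hr | hr := le_or_gt r 0
  · simp [ball_eq_empty.2 hr]
  obtain ⟨hpos, hle, hlt⟩ := h x r hr
  refine ENNReal.lt_top_of_mul_ne_top_right hlt.ne fun hCd => ?_
  rw [hCd, zero_mul] at hle
  exact hpos.not_ge hle

theorem one_le_const (h : IsDoublingWith μ Cd) (x : X) : 1 ≤ Cd := by
  have hle : μ (ball x 1) ≤ Cd * μ (ball x 1) :=
    (measure_mono (ball_subset_ball (by norm_num))).trans (h x 1 one_pos).2.1
  have := ENNReal.div_le_of_le_mul hle
  rwa [ENNReal.div_self (h.measure_ball_pos x one_pos).ne' (h.measure_ball_lt_top x 1).ne,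
    ENNReal.one_le_coe_iff] at this

theorem measure_ball_pow_le (h : IsDoublingWith μ Cd) (x : X) (hr : 0 < r) (n : ℕ) :
    μ (ball x (2 ^ n * r)) ≤ (Cd : ℝ≥0∞) ^ n * μ (ball x r) := by
  induction n with
  | zero => simp
  | succ n ih =>
    rw [pow_succ', pow_succ', mul_assoc, mul_assoc]
    exact (h x (2 ^ n * r) (by positivity)).2.1.trans (by gcongr)

theorem measureReal_ball_pos (h : IsDoublingWith μ Cd) (x : X) (hr : 0 < r) :
    0 < μ.real (ball x r) :=
  ENNReal.toReal_pos (h.measure_ball_pos x hr).ne' (h.measure_ball_lt_top x r).ne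

theorem measureReal_ball_pow_le (h : IsDoublingWith μ Cd) (x : X) (hr : 0 < r) (n : ℕ) :
    μ.real (ball x (2 ^ n * r)) ≤ (Cd : ℝ) ^ n * μ.real (ball x r) := by
  simpa [Measure.real] using ENNReal.toReal_mono
    (ENNReal.mul_ne_top (by simp) (h.measure_ball_lt_top x r).ne) (h.measure_ball_pow_le x hr n)

theorem isFiniteMeasureOnCompacts (h : IsDoublingWith μ Cd) : IsFiniteMeasureOnCompacts μ := by
  refine ⟨fun K hK => ?_⟩
  obtain rfl | ⟨x, -⟩ := K.eq_empty_or_nonempty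
  · simp
  obtain ⟨r, hr⟩ := hK.isBounded.subset_ball x
  exact (measure_mono hr).trans_lt (h.measure_ball_lt_top x r)

variable [OpensMeasurableSpace X]

theorem card_le_of_isSeparated (h : IsDoublingWith μ Cd) (hε : 0 < ε) {n : ℕ}
    (hn : 2 * R + ε ≤ 2 ^ n * (ε / 2)) {t : Finset X} (htR : ↑t ⊆ closedBall x R)
    (ht : IsSeparated (ENNReal.ofReal ε) (t : Set X)) : (t.card : ℝ≥0∞) ≤ (Cd : ℝ≥0∞) ^ n := by
  obtain rfl | ⟨y₀, hy₀⟩ := t.eq_empty_or_nonempty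
  · simp
  set B := ball x (R + ε / 2)
  have hR : 0 ≤ R := dist_nonneg.trans (mem_closedBall.1 (htR hy₀))
  have hBpos : μ B ≠ 0 := (h.measure_ball_pos x (by positivity)).ne'
  have hBsub : ∀ y ∈ t, B ⊆ ball y (2 ^ n * (ε / 2)) := fun y hy => by
    refine ball_subset_ball' ?_
    rw [dist_comm]
    linarith [mem_closedBall.1 (htR hy)]
  have hsubB : ∀ y ∈ t, ball y (ε / 2) ⊆ B := fun y hy =>
    ball_subset_ball' (by linarith [mem_closedBall.1 (htR hy)])
  have hdisj : (t : Set X).PairwiseDisjoint fun y => ball y (ε / 2) := fun y hy z hz hyz => by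
    refine ball_disjoint_ball ?_
    have hlt : ENNReal.ofReal ε < edist y z := ht hy hz hyz
    rw [edist_dist] at hlt
    linarith [(ENNReal.ofReal_lt_ofReal_iff_of_nonneg hε.le).1 hlt]
  have hle : (t.card : ℝ≥0∞) * μ B ≤ (Cd : ℝ≥0∞) ^ n * μ B := calc
    (t.card : ℝ≥0∞) * μ B = ∑ _y ∈ t, μ B := by rw [Finset.sum_const, nsmul_eq_mul]
    _ ≤ ∑ y ∈ t, (Cd : ℝ≥0∞) ^ n * μ (ball y (ε / 2)) := Finset.sum_le_sum fun y hy =>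
        (measure_mono (hBsub y hy)).trans (h.measure_ball_pow_le y (by positivity) n)
    _ = (Cd : ℝ≥0∞) ^ n * μ (⋃ y ∈ t, ball y (ε / 2)) := by
        rw [← Finset.mul_sum, measure_biUnion_finset hdisj fun _ _ => measurableSet_ball]
    _ ≤ (Cd : ℝ≥0∞) ^ n * μ B := by gcongr; exact iUnion₂_subset hsubB
  exact (ENNReal.mul_le_mul_iff_left hBpos (h.measure_ball_lt_top x _).ne).1 hle

theorem exists_finset_subset_iUnion_closedBall (h : IsDoublingWith μ Cd) (hA : A ⊆ closedBall x R)
    (hε : 0 < ε) {n : ℕ} (hn : 2 * R + ε ≤ 2 ^ n * (ε / 2)) :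
    ∃ t : Finset X, ↑t ⊆ A ∧ (t.card : ℝ≥0∞) ≤ (Cd : ℝ≥0∞) ^ n ∧
      A ⊆ ⋃ y ∈ t, closedBall y ε := by
  lift ε to ℝ≥0 using hε.le
  have hsep {t : Finset X} (htA : ↑t ⊆ A) (ht : IsSeparated (ε : ℝ≥0∞) (t : Set X)) :
      (t.card : ℝ≥0∞) ≤ (Cd : ℝ≥0∞) ^ n :=
    h.card_le_of_isSeparated hε hn (htA.trans hA) (by rwa [ENNReal.ofReal_coe_nnreal])
  have hpack : packingNumber ε A ≠ ⊤ := by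
    obtain ⟨N, hN⟩ := exists_nat_gt (Cd ^ n)
    refine ne_top_of_le_ne_top (ENat.natCast_ne_top N)
      (iSup₂_le fun C hC => iSup_le fun hCsep => ?_)
    by_contra! hlt
    obtain ⟨t, htC, ht⟩ := exists_subset_encard_eq hlt.le
    lift t to Finset X using finite_of_encard_eq_coe ht
    have := hsep (htC.trans hC) (hCsep.mono htC)
    rw [encard_coe_eq_coe_finsetCard, Nat.cast_inj] at ht
    rw [ht] at this
    exact hN.not_ge (by exact_mod_cast this)
  have hcover := isCover_maximalSeparatedSet hpack
  have hfin : (maximalSeparatedSet ε A).Finite := by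
    rwa [← encard_ne_top_iff, encard_maximalSeparatedSet hpack]
  refine ⟨hfin.toFinset, ?_, hsep ?_ ?_, ?_⟩
  · simpa using maximalSeparatedSet_subset
  · simpa using maximalSeparatedSet_subset
  · simpa using isSeparated_maximalSeparatedSet
  · simpa using hcover.subset_iUnion_closedBall

theorem properSpace [CompleteSpace X] (h : IsDoublingWith μ Cd) : ProperSpace X := by
  refine ⟨fun x R => TotallyBounded.isCompact_of_isClosed ?_ isClosed_closedBall⟩
  refine Metric.totallyBounded_iff.2 fun ε hε => ?_
  obtain ⟨n, hn⟩ := pow_unbounded_of_one_lt ((2 * R + ε / 2) / (ε / 2 / 2)) one_lt_two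
  obtain ⟨t, -, -, ht⟩ := h.exists_finset_subset_iUnion_closedBall (A := closedBall x R)
    Subset.rfl (half_pos hε) ((div_lt_iff₀ (by positivity)).1 hn).le
  exact ⟨t, t.finite_toSet, ht.trans (iUnion₂_mono fun y _ =>
    closedBall_subset_ball (half_lt_self hε))⟩

end IsDoublingWith

section TotalVariation

variable {X : Type u} [PseudoMetricSpace X] [MeasurableSpace X] {μ : Measure X} {f : X → ℝ}
  {W W' : Set X}

theorem TendstoL1loc.mono {us : ℕ → X → ℝ} (hu : TendstoL1loc μ us f W) (h : W' ⊆ W) :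
    TendstoL1loc μ us f W' :=
  fun K hK hKb hKW => hu K hK hKb (hKW.trans h)

theorem tendstoL1loc_univ_of_le {us : ℕ → X → ℝ} (x₀ : X) {r : ℕ → ℝ} {e : ℕ → ℝ≥0∞}
    (hr : Tendsto r atTop atTop) (he : Tendsto e atTop (𝓝 0))
    (h : ∀ n, ∫⁻ x in closedBall x₀ (r n), ENNReal.ofReal |us n x - f x| ∂μ ≤ e n) :
    TendstoL1loc μ us f univ := by
  intro K _ hKb _
  obtain ⟨R, hR⟩ := hKb.subset_closedBall x₀
  refine tendsto_of_tendsto_of_tendsto_of_le_of_le' tendsto_const_nhds he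
    (Eventually.of_forall fun _ => zero_le) ?_
  filter_upwards [hr.eventually_ge_atTop R] with n hn
  exact (lintegral_mono_set (hR.trans (closedBall_subset_closedBall hn))).trans (h n)

theorem totVarOn_le_liminf {us : ℕ → X → ℝ} (hus : ∀ i, LocallyLipschitzOnSet (us i) W)
    (hlim : TendstoL1loc μ us f W) :
    totVarOn μ f W ≤ liminf (fun i => ∫⁻ x in W, lipConst (us i) x ∂μ) atTop :=
  iInf_le_of_le us (iInf₂_le_of_le hus hlim le_rfl)

theorem totVarOn_mono (h : W' ⊆ W) : totVarOn μ f W' ≤ totVarOn μ f W :=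
  le_iInf fun _ => le_iInf₂ fun hus hlim =>
    (totVarOn_le_liminf (fun i => (hus i).mono h) (hlim.mono h)).trans
      (liminf_le_liminf (Eventually.of_forall fun _ => lintegral_mono_set h))

theorem exists_seq_lintegral_lipConst_le (hV : totVarOn μ f W ≠ ⊤) {ε : ℝ≥0∞} (hε : ε ≠ 0) :
    ∃ us : ℕ → X → ℝ, (∀ i, LocallyLipschitzOnSet (us i) W) ∧ TendstoL1loc μ us f W ∧
      ∀ i, ∫⁻ x in W, lipConst (us i) x ∂μ ≤ totVarOn μ f W + ε := by
  have hlt := ENNReal.lt_add_right hV hε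
  conv_lhs at hlt => unfold totVarOn
  simp only [iInf_lt_iff] at hlt
  obtain ⟨us, hus, hlim, hliminf⟩ := hlt
  obtain ⟨φ, hφ, hle⟩ :=
    extraction_of_frequently_atTop (frequently_lt_of_liminf_lt (by isBoundedDefault) hliminf)
  exact ⟨us ∘ φ, fun i => hus (φ i),
    fun K hK hKb hKW => (hlim K hK hKb hKW).comp hφ.tendsto_atTop, fun i => (hle i).le⟩

theorem exists_lintegral_sub_le_lintegral_lipConst_le (hV : totVarOn μ f W ≠ ⊤) {K : Set X}
    (hK : IsClosed K) (hKb : Bornology.IsBounded K) (hKW : K ⊆ W) {ε : ℝ≥0∞} (hε : ε ≠ 0) :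
    ∃ u : X → ℝ, LocallyLipschitzOnSet u W ∧
      ∫⁻ x in K, ENNReal.ofReal |u x - f x| ∂μ ≤ ε ∧
      ∫⁻ x in W, lipConst u x ∂μ ≤ totVarOn μ f W + ε := by
  obtain ⟨us, hus, hlim, hle⟩ := exists_seq_lintegral_lipConst_le hV hε
  obtain ⟨i, hi⟩ :=
    ((hlim K hK hKb hKW).eventually_lt_const (pos_iff_ne_zero.2 hε)).exists
  exact ⟨us i, hus i, hi.le, hle i⟩

end TotalVariation

section DyadicAnnulus

variable {X : Type u} [PseudoMetricSpace X]

/-- The dyadic annulus `2^(j-1) < dist x x₀ < 2^(j+2)`. It contains the ball of radius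
`dist p x₀ / 2` around each point `p` with `2^j ≤ dist p x₀ ≤ 2^(j+1)`. -/
def dyadicAnnulus (x₀ : X) (j : ℕ) : Set X :=
  {x | (2 : ℝ) ^ j < 2 * dist x x₀ ∧ dist x x₀ < 4 * 2 ^ j}

theorem isOpen_dyadicAnnulus (x₀ : X) (j : ℕ) : IsOpen (dyadicAnnulus x₀ j) :=
  (isOpen_lt (f := fun _ : X => (2 : ℝ) ^ j) (g := fun x => 2 * dist x x₀) (by fun_prop)
    (by fun_prop)).inter
    (isOpen_lt (f := fun x => dist x x₀) (g := fun _ : X => (4 : ℝ) * 2 ^ j) (by fun_prop)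
      (by fun_prop))

theorem tsum_indicator_dyadicAnnulus_le (x₀ : X) (g : X → ℝ≥0∞) (x : X) :
    ∑' j, (dyadicAnnulus x₀ j).indicator g x ≤ 3 * g x := by
  classical
  by_cases hex : ∃ j, x ∈ dyadicAnnulus x₀ j
  · set j₀ := Nat.find hex
    rw [tsum_eq_sum (s := Finset.Ico j₀ (j₀ + 3))]
    · refine (Finset.sum_le_card_nsmul _ _ (g x) fun j _ => indicator_le_self _ _ _).trans ?_
      simp
    · intro j hj
      refine indicator_of_notMem (fun hx => hj (Finset.mem_Ico.2 ⟨Nat.find_min' hex hx, ?_⟩)) _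
      have hlt : (2 : ℝ) ^ j < 2 ^ (j₀ + 3) := by
        rw [pow_add]
        linarith [hx.1, (Nat.find_spec hex).2]
      exact (pow_lt_pow_iff_right₀ (by norm_num)).1 hlt
  · push Not at hex
    simp only [indicator_of_notMem (hex _), tsum_zero, zero_le]

variable [MeasurableSpace X] {μ : Measure X} {f : X → ℝ} [BorelSpace X]

theorem tsum_lintegral_dyadicAnnulus_le (x₀ : X) {g : X → ℝ≥0∞} (hg : Measurable g) :
    ∑' j, ∫⁻ x in dyadicAnnulus x₀ j, g x ∂μ ≤ 3 * ∫⁻ x, g x ∂μ := by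
  simp_rw [← lintegral_indicator (isOpen_dyadicAnnulus x₀ _).measurableSet]
  rw [← lintegral_tsum fun j =>
    (hg.indicator (isOpen_dyadicAnnulus x₀ j).measurableSet).aemeasurable,
    ← lintegral_const_mul _ hg]
  exact lintegral_mono fun x => tsum_indicator_dyadicAnnulus_le x₀ g x

theorem tsum_totVarOn_dyadicAnnulus_le (x₀ : X) :
    ∑' j, totVarOn μ f (dyadicAnnulus x₀ j) ≤ 3 * totVarOn μ f univ := by
  conv_rhs => unfold totVarOn
  simp only [ENNReal.mul_iInf_of_ne (show (3 : ℝ≥0∞) ≠ 0 by simp) (show (3 : ℝ≥0∞) ≠ ⊤ by simp)]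
  refine le_iInf fun us => le_iInf₂ fun hus hlim => ?_
  calc ∑' j, totVarOn μ f (dyadicAnnulus x₀ j)
      ≤ ∑' j, liminf (fun i => ∫⁻ x in dyadicAnnulus x₀ j, lipConst (us i) x ∂μ) atTop :=
        ENNReal.tsum_le_tsum fun j => totVarOn_le_liminf
          (fun i => (hus i).mono (subset_univ _)) (hlim.mono (subset_univ _))
    _ ≤ liminf (fun i => ∑' j, ∫⁻ x in dyadicAnnulus x₀ j, lipConst (us i) x ∂μ) atTop := by
        simpa only [lintegral_count] using lintegral_liminf_le (μ := Measure.count) (u := atTop)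
          (f := fun (i j : ℕ) => ∫⁻ x in dyadicAnnulus x₀ j, lipConst (us i) x ∂μ)
          fun i => measurable_of_countable _
    _ ≤ liminf (fun i => 3 * ∫⁻ x in univ, lipConst (us i) x ∂μ) atTop := by
        refine liminf_le_liminf (Eventually.of_forall fun i => ?_)
        rw [setLIntegral_univ]
        exact tsum_lintegral_dyadicAnnulus_le x₀ (measurable_lipConst (hus i).continuous)
    _ = _ := ENNReal.liminf_const_mul_of_ne_top (by simp)

end DyadicAnnulus

namespace SupportsPoincare

variable {X : Type u} [MetricSpace X] [MeasurableSpace X] [BorelSpace X] {μ : Measure X} {CP : ℝ}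
  {u : X → ℝ} {x : X} {r : ℝ} {L : ℝ≥0}

theorem lintegral_sub_setAverage_le_of_lipschitzWith (hP : SupportsPoincare μ CP) (hr : 0 < r)
    (hfin : μ (ball x r) ≠ ⊤) (hu : LipschitzWith L u) :
    ∫⁻ y in ball x r, ENNReal.ofReal |u y - ⨍ z in ball x r, u z ∂μ| ∂μ ≤
      ENNReal.ofReal (CP * r) * ∫⁻ y in ball x r, lipConst u y ∂μ := by
  set c := ⨍ z in ball x r, u z ∂μ
  have hloc := LocallyLipschitzOnSet.of_lipschitzWith hu univ
  have hm := measurable_lipConst hu.continuous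
  have hlip : ∀ y, lipConst u y ≤ L := fun y =>
    lipConst_le_of_lipschitzOnWith univ_mem hu.lipschitzOnWith
  have : IsFiniteMeasure (μ.restrict (ball x r)) := isFiniteMeasure_restrict.2 hfin
  have hintu : Integrable (fun y => |u y - c|) (μ.restrict (ball x r)) := by
    have := hu.continuous
    refine Integrable.of_bound (C := L * r + |u x - c|)
      (by fun_prop : Continuous fun y => |u y - c|).aestronglyMeasurable ?_
    filter_upwards [ae_restrict_mem measurableSet_ball] with y hy
    rw [Real.norm_eq_abs, abs_abs]
    refine (abs_sub_le _ (u x) _).trans ?_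
    gcongr
    rw [← Real.dist_eq]
    exact (hu.dist_le_mul y x).trans (by gcongr; exact (mem_ball.1 hy).le)
  have hintg : Integrable (fun y => (lipConst u y).toReal) (μ.restrict (ball x r)) := by
    refine Integrable.of_bound (C := L) hm.ennreal_toReal.aestronglyMeasurable
      (Eventually.of_forall fun y => ?_)
    simpa [abs_of_nonneg ENNReal.toReal_nonneg] using
      ENNReal.toReal_mono ENNReal.coe_ne_top (hlip y)
  have hmain : ∫ y in ball x r, |u y - c| ∂μ ≤
      CP * r * ∫ y in ball x r, (lipConst u y).toReal ∂μ := by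
    have := mul_le_mul_of_nonneg_left (hP u hloc _ (fun _ => ENNReal.toReal_nonneg)
      hm.ennreal_toReal (isUpperGradientOf_lipConst hloc) x r hr) (measureReal_nonneg (μ := μ)
      (s := ball x r))
    rwa [mul_left_comm, ← smul_eq_mul, ← smul_eq_mul (μ.real _), measure_smul_setAverage _ hfin,
      measure_smul_setAverage _ hfin] at this
  calc ∫⁻ y in ball x r, ENNReal.ofReal |u y - c| ∂μ
      = ENNReal.ofReal (∫ y in ball x r, |u y - c| ∂μ) :=
        (ofReal_integral_eq_lintegral_ofReal hintu
          (Eventually.of_forall fun _ => abs_nonneg _)).symm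
    _ ≤ ENNReal.ofReal (CP * r * ∫ y in ball x r, (lipConst u y).toReal ∂μ) :=
        ENNReal.ofReal_le_ofReal hmain
    _ = ENNReal.ofReal (CP * r) * ∫⁻ y in ball x r, lipConst u y ∂μ := by
        rw [ENNReal.ofReal_mul' (integral_nonneg fun _ => ENNReal.toReal_nonneg),
          ofReal_integral_eq_lintegral_ofReal hintg
            (Eventually.of_forall fun _ => ENNReal.toReal_nonneg)]
        congr 1
        exact lintegral_congr fun y =>
          ENNReal.ofReal_toReal (ne_top_of_le_ne_top ENNReal.coe_ne_top (hlip y))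

theorem lintegral_sub_setAverage_le (hP : SupportsPoincare μ CP) (hr : 0 < r)
    (hfin : μ (ball x r) ≠ ⊤) (hu : LipschitzOnWith L u (closedBall x r)) :
    ∫⁻ y in ball x r, ENNReal.ofReal |u y - ⨍ z in ball x r, u z ∂μ| ∂μ ≤
      ENNReal.ofReal (CP * r) * ∫⁻ y in ball x r, lipConst u y ∂μ := by
  obtain ⟨w, hw, huw⟩ := hu.extend_real
  have huw : EqOn u w (ball x r) := huw.mono ball_subset_closedBall
  have havg : ⨍ z in ball x r, u z ∂μ = ⨍ z in ball x r, w z ∂μ :=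
    setAverage_congr_fun measurableSet_ball (Eventually.of_forall huw)
  have hlip : EqOn (lipConst u) (lipConst w) (ball x r) := fun y hy =>
    lipConst_congr_of_eventuallyEq (huw.eventuallyEq_of_mem (isOpen_ball.mem_nhds hy))
  rw [setLIntegral_congr_fun measurableSet_ball hlip, havg, setLIntegral_congr_fun
    measurableSet_ball fun y hy => by rw [huw hy]]
  exact hP.lintegral_sub_setAverage_le_of_lipschitzWith hr hfin hw

end SupportsPoincare

theorem lintegral_sub_setAverage_le_add {X : Type u} [MeasurableSpace X] {μ : Measure X}
    {u f : X → ℝ} {s : Set X} (hfin : μ s ≠ ⊤) (hu : IntegrableOn u s μ)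
    (hf : IntegrableOn f s μ) :
    ∫⁻ y in s, ENNReal.ofReal |f y - ⨍ z in s, f z ∂μ| ∂μ ≤
      2 * ∫⁻ y in s, ENNReal.ofReal |u y - f y| ∂μ +
        ∫⁻ y in s, ENNReal.ofReal |u y - ⨍ z in s, u z ∂μ| ∂μ := by
  set a := ⨍ z in s, u z ∂μ
  set b := ⨍ z in s, f z ∂μ
  have hsub : IntegrableOn (fun y => u y - f y) s μ := hu.sub hf
  have hab : ENNReal.ofReal |a - b| * μ s ≤ ∫⁻ y in s, ENNReal.ofReal |u y - f y| ∂μ := by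
    rw [← ofReal_measureReal hfin, ← ENNReal.ofReal_mul (abs_nonneg _),
      ← ofReal_integral_eq_lintegral_ofReal hsub.abs
        (Eventually.of_forall fun _ => abs_nonneg _)]
    refine ENNReal.ofReal_le_ofReal ?_
    rw [mul_comm, ← abs_of_nonneg (measureReal_nonneg (μ := μ) (s := s)), ← abs_mul, mul_sub,
      ← smul_eq_mul, ← smul_eq_mul (μ.real _), measure_smul_setAverage _ hfin,
      measure_smul_setAverage _ hfin, ← integral_sub hu hf]
    exact abs_integral_le_integral_abs
  calc ∫⁻ y in s, ENNReal.ofReal |f y - b| ∂μ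
      ≤ ∫⁻ y in s, (ENNReal.ofReal |u y - f y| + (ENNReal.ofReal |u y - a|
          + ENNReal.ofReal |a - b|)) ∂μ := by
        refine lintegral_mono fun y => ?_
        rw [← ENNReal.ofReal_add (abs_nonneg _) (abs_nonneg _),
          ← ENNReal.ofReal_add (abs_nonneg _) (by positivity), abs_sub_comm (u y) (f y)]
        exact ENNReal.ofReal_le_ofReal (by
          linarith [abs_sub_le (f y) (u y) b, abs_sub_le (u y) a b])
    _ = ∫⁻ y in s, ENNReal.ofReal |u y - f y| ∂μ + (∫⁻ y in s, ENNReal.ofReal |u y - a| ∂μ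
          + ENNReal.ofReal |a - b| * μ s) := by
        rw [lintegral_add_left' hsub.aemeasurable.abs.ennreal_ofReal,
          lintegral_add_right _ measurable_const, setLIntegral_const]
    _ ≤ ∫⁻ y in s, ENNReal.ofReal |u y - f y| ∂μ + (∫⁻ y in s, ENNReal.ofReal |u y - a| ∂μ
          + ∫⁻ y in s, ENNReal.ofReal |u y - f y| ∂μ) := by gcongr
    _ = _ := by ring

theorem SupportsPoincare.lintegral_sub_setAverage_le_totVarOn {X : Type u} [MetricSpace X]
    [MeasurableSpace X] [BorelSpace X] {μ : Measure X} {CP : ℝ} {f : X → ℝ} {A : Set X} {x : X}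
    {r : ℝ} (hP : SupportsPoincare μ CP) (hV : totVarOn μ f A ≠ ⊤) (hr : 0 < r)
    (hfin : μ (ball x r) ≠ ⊤) (hf : IntegrableOn f (ball x r) μ) (hA : closedBall x r ⊆ A) :
    ∫⁻ y in ball x r, ENNReal.ofReal |f y - ⨍ z in ball x r, f z ∂μ| ∂μ ≤
      ENNReal.ofReal (CP * r) * totVarOn μ f A := by
  rw [mul_comm, ← ENNReal.div_le_iff_le_mul (Or.inr hV) (Or.inl ENNReal.ofReal_ne_top)]
  refine le_iInf fun us => le_iInf₂ fun hus hlim => ENNReal.div_le_of_le_mul ?_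
  set e : ℕ → ℝ≥0∞ := fun i => 2 * ∫⁻ y in ball x r, ENNReal.ofReal |us i y - f y| ∂μ
  have he : Tendsto e atTop (𝓝 0) := by
    have hcl := hlim _ isClosed_closedBall isBounded_closedBall hA
    have hball := tendsto_of_tendsto_of_tendsto_of_le_of_le tendsto_const_nhds hcl
      (fun _ => zero_le) fun i => lintegral_mono_set ball_subset_closedBall
    simpa only [mul_zero] using ENNReal.Tendsto.const_mul hball (Or.inr ENNReal.ofNat_ne_top)
  have hle : ∀ i, ∫⁻ y in ball x r, ENNReal.ofReal |f y - ⨍ z in ball x r, f z ∂μ| ∂μ ≤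
      e i + ENNReal.ofReal (CP * r) * ∫⁻ y in A, lipConst (us i) y ∂μ := fun i => by
    obtain ⟨L, hL⟩ := hus i _ isClosed_closedBall isBounded_closedBall hA
    have hui : IntegrableOn (us i) (ball x r) μ := by
      refine IntegrableOn.of_bound hfin.lt_top ((hL.continuousOn.mono
        ball_subset_closedBall).aestronglyMeasurable measurableSet_ball) (L * r + |us i x|) ?_
      filter_upwards [ae_restrict_mem measurableSet_ball] with y hy
      have := hL.dist_le_mul y (ball_subset_closedBall hy) x (mem_closedBall_self hr.le)
      rw [Real.dist_eq] at this
      have hyr : L * dist y x ≤ L * r := by gcongr; exact (mem_ball.1 hy).le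
      rw [Real.norm_eq_abs]
      linarith [abs_sub_abs_le_abs_sub (us i y) (us i x)]
    refine (lintegral_sub_setAverage_le_add hfin hui hf).trans ?_
    gcongr
    refine (hP.lintegral_sub_setAverage_le hr hfin hL).trans ?_
    gcongr
    exact ball_subset_closedBall.trans hA
  calc ∫⁻ y in ball x r, ENNReal.ofReal |f y - ⨍ z in ball x r, f z ∂μ| ∂μ
      ≤ liminf (fun i => e i + ENNReal.ofReal (CP * r) * ∫⁻ y in A, lipConst (us i) y ∂μ) atTop :=
        le_liminf_of_le (by isBoundedDefault) (Eventually.of_forall hle)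
    _ = liminf (fun i => ENNReal.ofReal (CP * r) * ∫⁻ y in A, lipConst (us i) y ∂μ) atTop :=
        ENNReal.liminf_add_of_left_tendsto_zero he _
    _ = liminf (fun i => ∫⁻ y in A, lipConst (us i) y ∂μ) atTop * ENNReal.ofReal (CP * r) := by
        rw [ENNReal.liminf_const_mul_of_ne_top ENNReal.ofReal_ne_top, mul_comm]

theorem exists_level_measure_le {α : Type*} [MeasurableSpace α] {μ : Measure α} [SigmaFinite μ]
    {a b : α → ℝ} (ha : Measurable a) (hb : Measurable b) {c d : ℝ} (hcd : c < d) :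
    ∃ s ∈ Ioo c d, μ {x | a x = s} = 0 ∧ μ {x | b x = s} = 0 ∧
      ENNReal.ofReal (d - c) * μ {x | a x < s ∧ s < b x} ≤
        ∫⁻ x, ENNReal.ofReal (b x - a x) ∂μ := by
  have hR := measurableSet_regionBetween ha hb MeasurableSet.univ
  have hsection : ∀ s : ℝ, (fun x => (x, s)) ⁻¹' regionBetween a b univ =
      {x | a x < s ∧ s < b x} := fun s => by ext; simp [regionBetween]
  have hlayer : ∫⁻ s, μ {x | a x < s ∧ s < b x} = ∫⁻ x, ENNReal.ofReal (b x - a x) ∂μ := by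
    simpa only [Measure.prod_apply_symm hR, hsection, setLIntegral_univ] using!
      volume_regionBetween_eq_lintegral' (μ := μ) ha hb MeasurableSet.univ
  have hmeas : Measurable fun s => μ {x | a x < s ∧ s < b x} := by
    simpa only [hsection] using measurable_measure_prodMk_right (μ := μ) hR
  have hvol : volume (Ioo c d) ≠ 0 := by simpa using hcd
  have hnull : volume.restrict (Ioo c d)
      ({s | 0 < μ {x | a x = s}} ∪ {s | 0 < μ {x | b x = s}} ∪ (Ioo c d)ᶜ) = 0 := by
    refine measure_union_null (((Measure.countable_meas_level_set_pos ha).union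
      (Measure.countable_meas_level_set_pos hb)).measure_zero _) ?_
    rw [Measure.restrict_apply measurableSet_Ioo.compl, compl_inter_self, measure_empty]
  obtain ⟨s, hsN, hs⟩ := exists_notMem_null_le_laverage
    (Measure.restrict_eq_zero.not.2 hvol) hmeas.aemeasurable hnull
  simp only [mem_union, not_or, mem_ofPred_eq, not_lt, notMem_compl_iff,
    nonpos_iff_eq_zero] at hsN
  refine ⟨s, hsN.2, hsN.1.1, hsN.1.2, ?_⟩
  rw [← hlayer, ← Real.volume_Ioo, mul_comm]
  rw [setLAverage_eq] at hs
  exact (ENNReal.mul_le_of_le_div hs).trans (setLIntegral_le_lintegral _ _)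

section Transition

/-- The truncation of `u` to the interval `[v - ψ, v + ψ]`. -/
def clampAround (u v ψ : ℝ) : ℝ := max (v - ψ) (min u (v + ψ))

theorem abs_clampAround_sub_le {u v ψ : ℝ} (hψ : 0 ≤ ψ) (a : ℝ) :
    |clampAround u v ψ - a| ≤ |u - a| + |v - a| := by
  have hle : clampAround u v ψ ≤ max u v :=
    max_le (le_max_of_le_right (by linarith)) (le_max_of_le_left (min_le_left _ _))
  have hge : min u v ≤ clampAround u v ψ :=
    le_max_of_le_right (le_min (min_le_left _ _) (min_le_of_right_le (by linarith)))
  have hmax : max u v - a ≤ |u - a| + |v - a| := by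
    rw [sub_le_iff_le_add]
    exact max_le (by linarith [le_abs_self (u - a), abs_nonneg (v - a)])
      (by linarith [le_abs_self (v - a), abs_nonneg (u - a)])
  have hmin : a - (|u - a| + |v - a|) ≤ min u v :=
    le_min (by linarith [neg_abs_le (u - a), abs_nonneg (v - a)])
      (by linarith [neg_abs_le (v - a), abs_nonneg (u - a)])
  exact abs_le.2 ⟨by linarith, by linarith⟩

theorem abs_clampAround_sub_clampAround_le (u v ψ u' v' ψ' : ℝ) :
    |clampAround u v ψ - clampAround u' v' ψ'| ≤ |u - u'| + |v - v'| + |ψ - ψ'| := by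
  have h1 : |(v - ψ) - (v' - ψ')| ≤ |v - v'| + |ψ - ψ'| := by
    rw [sub_sub_sub_comm]
    exact abs_sub _ _
  have h2 : |(v + ψ) - (v' + ψ')| ≤ |v - v'| + |ψ - ψ'| := by
    rw [add_sub_add_comm]
    exact abs_add_le _ _
  refine (abs_max_sub_max_le_max _ _ _ _).trans (max_le ?_ ?_)
  · linarith [abs_nonneg (u - u')]
  · refine (abs_min_sub_min_le_max _ _ _ _).trans (max_le ?_ ?_)
    · linarith [abs_nonneg (v - v'), abs_nonneg (ψ - ψ')]
    · linarith [abs_nonneg (u - u')]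

theorem clampAround_of_abs_le {u v ψ : ℝ} (h : |u - v| ≤ ψ) : clampAround u v ψ = u := by
  rw [abs_le] at h
  rw [clampAround, min_eq_left (by linarith), max_eq_right (by linarith)]

theorem clampAround_of_le_sub {u v ψ : ℝ} (hψ : 0 ≤ ψ) (h : ψ ≤ u - v) :
    clampAround u v ψ = v + ψ := by
  rw [clampAround, min_eq_right (by linarith), max_eq_right (by linarith)]

theorem clampAround_of_le_sub' {u v ψ : ℝ} (hψ : 0 ≤ ψ) (h : ψ ≤ v - u) :
    clampAround u v ψ = v - ψ := by
  rw [clampAround, min_eq_left (by linarith), max_eq_left (by linarith)]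

variable {X : Type u} {u v ρ : X → ℝ} {x : X} {Λ s : ℝ}

/-- The ramp `Λ (ρ - s)₊`, the radius to which `transition` truncates. -/
def ramp (ρ : X → ℝ) (Λ s : ℝ) (x : X) : ℝ := Λ * max (ρ x - s) 0

theorem ramp_nonneg (hΛ : 0 ≤ Λ) (x : X) : 0 ≤ ramp ρ Λ s x := by
  unfold ramp; positivity

theorem ramp_of_le (h : ρ x ≤ s) : ramp ρ Λ s x = 0 := by
  rw [ramp, max_eq_right (by linarith), mul_zero]

theorem ramp_of_ge (h : s ≤ ρ x) : ramp ρ Λ s x = Λ * (ρ x - s) := by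
  rw [ramp, max_eq_left (by linarith)]

/-- The function equal to `v` where `ρ ≤ s` and to `u` where `1 ≤ ρ`; in between, it is `u`
truncated to a neighbourhood of `v` whose radius grows with slope `Λ` in `ρ`. -/
def transition (u v ρ : X → ℝ) (Λ s : ℝ) (x : X) : ℝ :=
  if 1 ≤ ρ x then u x else clampAround (u x) (v x) (ramp ρ Λ s x)

theorem transition_of_lt_one (h : ρ x < 1) :
    transition u v ρ Λ s x = clampAround (u x) (v x) (ramp ρ Λ s x) :=
  if_neg h.not_ge

theorem transition_of_le (hs : s < 1) (h : ρ x ≤ s) : transition u v ρ Λ s x = v x := by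
  rw [transition_of_lt_one (h.trans_lt hs), ramp_of_le h, clampAround]
  simp

theorem transition_of_abs_sub_le (h : |u x - v x| ≤ ramp ρ Λ s x) :
    transition u v ρ Λ s x = u x := by
  unfold transition
  split_ifs
  · rfl
  · exact clampAround_of_abs_le h

theorem transition_of_three_fourths_le (hΛ : ∀ y, 0 ≤ ρ y → ρ y ≤ 1 → 4 * |u y - v y| ≤ Λ)
    (hΛ0 : 0 ≤ Λ) (hs : s ≤ 1 / 2) (h : 3 / 4 ≤ ρ x) :
    transition u v ρ Λ s x = u x := by
  obtain h1 | h1 := le_or_gt 1 (ρ x)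
  · exact if_pos h1
  · refine transition_of_abs_sub_le ?_
    rw [ramp_of_ge (by linarith)]
    have := hΛ x (by linarith) h1.le
    nlinarith

theorem abs_transition_sub_le (hΛ : 0 ≤ Λ) (hs : s ∈ Ioo (0 : ℝ) 1) (x : X) (a : ℝ) :
    |transition u v ρ Λ s x - a| ≤
      {y | 0 ≤ ρ y}.indicator (fun y => |u y - a|) x +
        {y | ρ y ≤ 1}.indicator (fun y => |v y - a|) x := by
  obtain h0 | h0 := lt_or_ge (ρ x) 0
  · rw [transition_of_le hs.2 (h0.le.trans hs.1.le), indicator_of_notMem (by simpa using h0),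
      indicator_of_mem (by simp; linarith), zero_add]
  rw [indicator_of_mem (by simpa using h0)]
  obtain h1 | h1 := lt_or_ge (ρ x) 1
  · rw [transition_of_lt_one h1, indicator_of_mem (by simpa using h1.le)]
    exact abs_clampAround_sub_le (ramp_nonneg hΛ x) a
  · rw [transition, if_pos h1]
    exact le_add_of_nonneg_right (indicator_nonneg (fun _ _ => abs_nonneg _) _)

/-- The distance `|u - v|` on the layer `0 ≤ ρ ≤ 1`, extended by `0`. -/
def layerGap (u v ρ : X → ℝ) : X → ℝ :=
  {y | 0 ≤ ρ y ∧ ρ y ≤ 1}.indicator fun y => |u y - v y|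

theorem layerGap_nonneg (x : X) : 0 ≤ layerGap u v ρ x :=
  indicator_nonneg (fun _ _ => abs_nonneg _) _

theorem layerGap_of_mem (h0 : 0 ≤ ρ x) (h1 : ρ x ≤ 1) : layerGap u v ρ x = |u x - v x| :=
  indicator_of_mem (s := {y | 0 ≤ ρ y ∧ ρ y ≤ 1}) ⟨h0, h1⟩ _

theorem le_one_of_sub_layerGap_lt (h : ρ x - layerGap u v ρ x / Λ < s) (hs : s < ρ x) :
    ρ x ≤ 1 := by
  by_contra hρ1
  rw [layerGap, indicator_of_notMem fun hx => hρ1 hx.2, zero_div] at h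
  linarith

theorem ofReal_mul_lintegral_layerGap_div [MeasurableSpace X] {μ : Measure X}
    (hΛ : 0 < Λ) (hT : MeasurableSet {x | 0 ≤ ρ x ∧ ρ x ≤ 1}) :
    ENNReal.ofReal Λ * ∫⁻ x, ENNReal.ofReal (layerGap u v ρ x / Λ) ∂μ =
      ∫⁻ x in {x | 0 ≤ ρ x ∧ ρ x ≤ 1}, ENNReal.ofReal |u x - v x| ∂μ := by
  rw [← lintegral_const_mul' _ _ ENNReal.ofReal_ne_top, ← lintegral_indicator hT]
  refine lintegral_congr fun x => ?_
  rw [← ENNReal.ofReal_mul hΛ.le, mul_div_cancel₀ _ hΛ.ne', layerGap]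
  exact (congrFun (indicator_comp_of_zero (g := ENNReal.ofReal) ENNReal.ofReal_zero) x).symm

variable [PseudoMetricSpace X] {L : ℝ≥0}

theorem lipConst_clampAround_le {ψ : X → ℝ} (hu : ContinuousAt u x) (hv : ContinuousAt v x)
    (hψ : LipschitzWith L ψ) (hψ0 : ∀ y, 0 ≤ ψ y) (hlt : ψ x < |u x - v x|) :
    lipConst (fun y => clampAround (u y) (v y) (ψ y)) x ≤ lipConst v x + L := by
  rw [← ENNReal.ofReal_coe_nnreal]
  refine lipConst_le_add L.2 ?_
  have hdist : ∀ y, |ψ y - ψ x| ≤ L * dist y x := fun y => hψ.dist_le_mul y x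
  obtain hlt | hlt := lt_abs.1 hlt
  · filter_upwards [hψ.continuous.continuousAt.eventually_lt (hu.sub hv) hlt] with y hy
    rw [clampAround_of_le_sub (hψ0 y) hy.le, clampAround_of_le_sub (hψ0 x) hlt.le,
      add_sub_add_comm]
    exact (abs_add_le _ _).trans (by gcongr; exact hdist y)
  · rw [neg_sub] at hlt
    filter_upwards [hψ.continuous.continuousAt.eventually_lt (hv.sub hu) hlt] with y hy
    rw [clampAround_of_le_sub' (hψ0 y) hy.le, clampAround_of_le_sub' (hψ0 x) hlt.le,
      sub_sub_sub_comm]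
    exact (abs_sub _ _).trans (by gcongr; exact hdist y)

theorem lipschitzWith_ramp (hρ : LipschitzWith L ρ) (hΛ : 0 ≤ Λ) (s : ℝ) :
    LipschitzWith (Λ.toNNReal * L) (ramp ρ Λ s) := by
  refine LipschitzWith.of_dist_le_mul fun x y => ?_
  rw [Real.dist_eq, ramp, ramp, ← mul_sub, abs_mul, abs_of_nonneg hΛ, NNReal.coe_mul,
    Real.coe_toNNReal _ hΛ, mul_assoc]
  gcongr
  refine (abs_max_sub_max_le_abs _ _ _).trans ?_
  rw [sub_sub_sub_cancel_right]
  exact hρ.dist_le_mul x y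

theorem lipConst_transition_of_lt (hρ : Continuous ρ) (hs : s < 1) (h : ρ x < s) :
    lipConst (transition u v ρ Λ s) x = lipConst v x :=
  lipConst_congr_of_eventuallyEq <| by
    filter_upwards [hρ.continuousAt.eventually_lt_const h] with y hy
      using transition_of_le hs hy.le

theorem lipConst_transition_of_three_fourths_lt (hρ : Continuous ρ)
    (hΛ : ∀ y, 0 ≤ ρ y → ρ y ≤ 1 → 4 * |u y - v y| ≤ Λ) (hΛ0 : 0 ≤ Λ)
    (hs : s ≤ 1 / 2) (h : 3 / 4 < ρ x) :
    lipConst (transition u v ρ Λ s) x = lipConst u x :=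
  lipConst_congr_of_eventuallyEq <| by
    filter_upwards [hρ.continuousAt.eventually_const_lt h] with y hy
      using transition_of_three_fourths_le hΛ hΛ0 hs hy.le

theorem lipConst_transition_of_abs_sub_lt (hρ : LipschitzWith L ρ) (hu : ContinuousAt u x)
    (hv : ContinuousAt v x) (hΛ : 0 ≤ Λ) (h : |u x - v x| < ramp ρ Λ s x) :
    lipConst (transition u v ρ Λ s) x = lipConst u x :=
  lipConst_congr_of_eventuallyEq <| by
    filter_upwards [(hu.sub hv).abs.eventually_lt
      (lipschitzWith_ramp hρ hΛ s).continuous.continuousAt h] with y hy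
      using transition_of_abs_sub_le hy.le

theorem lipConst_transition_le (hρ : LipschitzWith L ρ) (hu : ContinuousAt u x)
    (hv : ContinuousAt v x) (hΛ : 0 ≤ Λ) (h1 : ρ x < 1) (h : ramp ρ Λ s x < |u x - v x|) :
    lipConst (transition u v ρ Λ s) x ≤ lipConst v x + ENNReal.ofReal Λ * L := by
  have hclamp : transition u v ρ Λ s =ᶠ[𝓝 x] fun y => clampAround (u y) (v y) (ramp ρ Λ s y) := by
    filter_upwards [hρ.continuous.continuousAt.eventually_lt_const h1] with y hy
      using transition_of_lt_one hy
  rw [lipConst_congr_of_eventuallyEq hclamp]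
  exact_mod_cast lipConst_clampAround_le hu hv (lipschitzWith_ramp hρ hΛ s) (ramp_nonneg hΛ) h

theorem exists_lipschitzOnWith_of_eventuallyEq {h k : X → ℝ} (hhk : h =ᶠ[𝓝 x] k)
    (hk : ∃ C : ℝ≥0, ∃ t ∈ 𝓝 x, LipschitzOnWith C k t) :
    ∃ C : ℝ≥0, ∃ t ∈ 𝓝 x, LipschitzOnWith C h t := by
  obtain ⟨C, t, ht, hC⟩ := hk
  refine ⟨C, t ∩ {y | h y = k y}, inter_mem ht hhk, fun y hy z hz => ?_⟩
  rw [show h y = k y from hy.2, show h z = k z from hz.2]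
  exact hC hy.1 hz.1

theorem exists_lipschitzOnWith_clampAround {ψ : X → ℝ}
    (hu : ∃ C : ℝ≥0, ∃ t ∈ 𝓝 x, LipschitzOnWith C u t)
    (hv : ∃ C : ℝ≥0, ∃ t ∈ 𝓝 x, LipschitzOnWith C v t) (hψ : LipschitzWith L ψ) :
    ∃ C : ℝ≥0, ∃ t ∈ 𝓝 x, LipschitzOnWith C (fun y => clampAround (u y) (v y) (ψ y)) t := by
  obtain ⟨Cu, tu, htu, hCu⟩ := hu
  obtain ⟨Cv, tv, htv, hCv⟩ := hv
  refine ⟨Cu + Cv + L, tu ∩ tv, inter_mem htu htv,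
    LipschitzOnWith.of_dist_le_mul fun y hy z hz => ?_⟩
  rw [Real.dist_eq, NNReal.coe_add, NNReal.coe_add, add_mul, add_mul]
  exact (abs_clampAround_sub_clampAround_le _ _ _ _ _ _).trans (add_le_add (add_le_add
    (hCu.dist_le_mul y hy.1 z hz.1) (hCv.dist_le_mul y hy.2 z hz.2)) (hψ.dist_le_mul y z))

variable {W W' : Set X}

theorem locallyLipschitzOnSet_transition [ProperSpace X] (hW : IsOpen W) (hW' : IsOpen W')
    (hu : LocallyLipschitzOnSet u W) (hv : LocallyLipschitzOnSet v W') (hρ : LipschitzWith L ρ)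
    (hρW : ∀ x, 0 ≤ ρ x → x ∈ W) (hρW' : ∀ x, ρ x ≤ 1 → x ∈ W')
    (hΛ : ∀ y, 0 ≤ ρ y → ρ y ≤ 1 → 4 * |u y - v y| ≤ Λ) (hΛ0 : 0 ≤ Λ)
    (hs : s ∈ Ioo (0 : ℝ) (1 / 2)) : LocallyLipschitzOnSet (transition u v ρ Λ s) univ := by
  refine LocallyLipschitzOnSet.of_exists_mem_nhds fun x _ => ?_
  have hρc : ContinuousAt ρ x := hρ.continuous.continuousAt
  obtain hlt | hge := lt_or_ge (ρ x) s
  · refine exists_lipschitzOnWith_of_eventuallyEq ?_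
      (hv.exists_mem_nhds hW' (hρW' x (by linarith [hs.2])))
    filter_upwards [hρc.eventually_lt_const hlt] with y hy
      using transition_of_le (by linarith [hs.2]) hy.le
  obtain hle | hgt := le_or_gt (ρ x) (3 / 4)
  · refine exists_lipschitzOnWith_of_eventuallyEq ?_ (exists_lipschitzOnWith_clampAround
      (hu.exists_mem_nhds hW (hρW x (hs.1.le.trans hge)))
      (hv.exists_mem_nhds hW' (hρW' x (by linarith))) (lipschitzWith_ramp hρ hΛ0 s))
    filter_upwards [hρc.eventually_lt_const (show ρ x < 1 by linarith)] with y hy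
      using transition_of_lt_one hy
  · refine exists_lipschitzOnWith_of_eventuallyEq ?_
      (hu.exists_mem_nhds hW (hρW x (by linarith)))
    filter_upwards [hρc.eventually_const_lt hgt] with y hy
      using transition_of_three_fourths_le hΛ hΛ0 hs.2.le hy.le

theorem lipConst_transition_of_lt_sub_layerGap (hρ : LipschitzWith L ρ) (hu : ContinuousAt u x)
    (hv : ρ x ≤ 1 → ContinuousAt v x) (hΛ : ∀ y, 0 ≤ ρ y → ρ y ≤ 1 → 4 * |u y - v y| ≤ Λ)
    (hΛ0 : 0 < Λ) (hs : s ∈ Ioo (0 : ℝ) (1 / 2))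
    (h : s < ρ x - layerGap u v ρ x / Λ) :
    lipConst (transition u v ρ Λ s) x = lipConst u x := by
  have hsρ : s < ρ x := h.trans_le (sub_le_self _ (div_nonneg (layerGap_nonneg x) hΛ0.le))
  obtain h34 | h34 := lt_or_ge (3 / 4) (ρ x)
  · exact lipConst_transition_of_three_fourths_lt hρ.continuous hΛ hΛ0.le hs.2.le h34
  have hρ1 : ρ x ≤ 1 := by linarith
  refine lipConst_transition_of_abs_sub_lt hρ hu (hv hρ1) hΛ0.le ?_
  rw [layerGap_of_mem (hs.1.trans hsρ).le hρ1, lt_sub_comm, div_lt_iff₀' hΛ0] at h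
  rwa [ramp_of_ge hsρ.le]

theorem lipConst_transition_le_of_sub_layerGap_lt (hρ : LipschitzWith L ρ)
    (hu : 0 ≤ ρ x → ContinuousAt u x) (hv : ContinuousAt v x)
    (hΛ : ∀ y, 0 ≤ ρ y → ρ y ≤ 1 → 4 * |u y - v y| ≤ Λ) (hΛ0 : 0 < Λ)
    (hs : s ∈ Ioo (0 : ℝ) (1 / 2)) (h : ρ x - layerGap u v ρ x / Λ < s) (hsρ : ρ x ≠ s) :
    lipConst (transition u v ρ Λ s) x ≤ lipConst v x +
      {y | ρ y - layerGap u v ρ y / Λ < s ∧ s < ρ y}.indicator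
        (fun _ => ENNReal.ofReal Λ * (L : ℝ≥0∞)) x := by
  obtain hlt | hsρ := lt_or_gt_of_ne hsρ
  · rw [lipConst_transition_of_lt hρ.continuous (by linarith [hs.2]) hlt]
    exact le_self_add
  have hρ0 : 0 ≤ ρ x := (hs.1.trans hsρ).le
  have hρ1 : ρ x ≤ 1 := le_one_of_sub_layerGap_lt h hsρ
  rw [indicator_of_mem (show x ∈ {y | ρ y - layerGap u v ρ y / Λ < s ∧ s < ρ y} from ⟨h, hsρ⟩)]
  rw [layerGap_of_mem hρ0 hρ1, sub_lt_comm, lt_div_iff₀' hΛ0] at h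
  refine lipConst_transition_le hρ (hu hρ0) hv hΛ0.le ?_ (by rwa [ramp_of_ge hsρ.le])
  have := hΛ x hρ0 hρ1
  nlinarith [hs.2]

theorem exists_four_mul_abs_sub_le [ProperSpace X] (hu : ContinuousOn u {x | 0 ≤ ρ x})
    (hv : ContinuousOn v {x | ρ x ≤ 1}) (hρ : Continuous ρ)
    (hT : Bornology.IsBounded {x | 0 ≤ ρ x ∧ ρ x ≤ 1}) :
    ∃ Λ : ℝ, 0 < Λ ∧ ∀ y, 0 ≤ ρ y → ρ y ≤ 1 → 4 * |u y - v y| ≤ Λ := by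
  have hTc : IsClosed {x | 0 ≤ ρ x ∧ ρ x ≤ 1} :=
    (isClosed_le continuous_const hρ).inter (isClosed_le hρ continuous_const)
  obtain ⟨M, hM⟩ := (isCompact_of_isClosed_isBounded hTc hT).exists_bound_of_continuousOn
    ((hu.mono fun _ hx => hx.1).sub (hv.mono fun _ hx => hx.2))
  refine ⟨max (4 * M) 1, by positivity, fun y h0 h1 => le_max_of_le_left ?_⟩
  gcongr
  exact hM y ⟨h0, h1⟩

variable [MeasurableSpace X] [BorelSpace X] {μ : Measure X}

theorem measurable_layerGap (hu : ContinuousOn u {x | 0 ≤ ρ x})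
    (hv : ContinuousOn v {x | ρ x ≤ 1}) (hρ : Continuous ρ) : Measurable (layerGap u v ρ) := by
  classical
  have hT : IsClosed {x | 0 ≤ ρ x ∧ ρ x ≤ 1} :=
    (isClosed_le continuous_const hρ).inter (isClosed_le hρ continuous_const)
  rw [layerGap, ← piecewise_eq_indicator]
  exact (((hu.mono fun _ hx => hx.1).sub (hv.mono fun _ hx => hx.2)).abs).measurable_piecewise
    continuousOn_const hT.measurableSet

theorem lintegral_lipConst_transition_le (hW : IsOpen W) (hW' : IsOpen W')
    (hu : LocallyLipschitzOnSet u W) (hv : LocallyLipschitzOnSet v W') (hρ : LipschitzWith L ρ)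
    (hρW : ∀ x, 0 ≤ ρ x → x ∈ W) (hρW' : ∀ x, ρ x ≤ 1 → x ∈ W')
    (hΛ : ∀ y, 0 ≤ ρ y → ρ y ≤ 1 → 4 * |u y - v y| ≤ Λ) (hΛ0 : 0 < Λ)
    (hs : s ∈ Ioo (0 : ℝ) (1 / 2)) (hsa : μ {x | ρ x - layerGap u v ρ x / Λ = s} = 0)
    (hsb : μ {x | ρ x = s} = 0) :
    ∫⁻ x, lipConst (transition u v ρ Λ s) x ∂μ ≤
      ∫⁻ x in W, lipConst u x ∂μ + ∫⁻ x in W', lipConst v x ∂μ +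
        ENNReal.ofReal Λ * L * μ {x | ρ x - layerGap u v ρ x / Λ < s ∧ s < ρ x} := by
  set a : X → ℝ := fun x => ρ x - layerGap u v ρ x / Λ
  have ha : Measurable a := hρ.continuous.measurable.sub ((measurable_layerGap
    ((hu.continuousOn hW).mono hρW) ((hv.continuousOn hW').mono hρW') hρ.continuous).div_const Λ)
  have hB : MeasurableSet {x | a x < s ∧ s < ρ x} := (measurableSet_lt ha measurable_const).inter
    (measurableSet_lt measurable_const hρ.continuous.measurable)
  set G : Set X := {x | s < a x}
  have hG : MeasurableSet G := measurableSet_lt measurable_const ha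
  have hsρ : ∀ x ∈ G, s < ρ x := fun x hx =>
    lt_of_lt_of_le hx (sub_le_self _ (div_nonneg (layerGap_nonneg x) hΛ0.le))
  have hGW : G ⊆ W := fun x hx => hρW x (hs.1.trans (hsρ x hx)).le
  have hGW' : Gᶜ ⊆ W' := fun x hx => hρW' x <| by
    by_contra! hρ1
    refine hx (show s < a x from ?_)
    have : layerGap u v ρ x = 0 := indicator_of_notMem (fun h => h.2.not_gt hρ1) _
    simp only [a, this, zero_div]
    linarith [hs.2]
  have hinner : ∀ x ∈ G, lipConst (transition u v ρ Λ s) x ≤ lipConst u x := fun x hx =>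
    (lipConst_transition_of_lt_sub_layerGap hρ (hu.continuousAt hW (hGW hx))
      (fun hx1 => hv.continuousAt hW' (hρW' x hx1)) hΛ hΛ0 hs hx).le
  have houter : ∀ᵐ x ∂μ, x ∈ Gᶜ → lipConst (transition u v ρ Λ s) x ≤ lipConst v x +
      {x | a x < s ∧ s < ρ x}.indicator (fun _ => ENNReal.ofReal Λ * L) x := by
    filter_upwards [measure_eq_zero_iff_ae_notMem.1 hsa, measure_eq_zero_iff_ae_notMem.1 hsb]
      with x hxa hxb hxG
    exact lipConst_transition_le_of_sub_layerGap_lt hρ (fun hx0 => hu.continuousAt hW (hρW x hx0))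
      (hv.continuousAt hW' (hGW' hxG)) hΛ hΛ0 hs (lt_of_le_of_ne (not_lt.1 hxG) hxa) hxb
  rw [← lintegral_add_compl _ hG, add_assoc]
  refine add_le_add ((setLIntegral_mono' hG hinner).trans (lintegral_mono_set hGW)) ?_
  refine (setLIntegral_mono_ae' hG.compl houter).trans ?_
  rw [lintegral_add_right _ (measurable_const.indicator hB), ← lintegral_indicator_const hB]
  exact add_le_add (lintegral_mono_set hGW') (setLIntegral_le_lintegral _ _)

/- The level `s` at which the transition starts is chosen by averaging over `(0, 1/2)`: the extra
slope `Λ L` only occurs on a set whose average measure is at most `2 ∫ |u - v| / Λ`. -/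
theorem exists_glue [ProperSpace X] [SigmaFinite μ] (hW : IsOpen W) (hW' : IsOpen W')
    (hu : LocallyLipschitzOnSet u W) (hv : LocallyLipschitzOnSet v W') (hρ : LipschitzWith L ρ)
    (hρW : ∀ x, 0 ≤ ρ x → x ∈ W) (hρW' : ∀ x, ρ x ≤ 1 → x ∈ W')
    (hT : Bornology.IsBounded {x | 0 ≤ ρ x ∧ ρ x ≤ 1}) :
    ∃ h : X → ℝ, LocallyLipschitzOnSet h univ ∧
      (∀ x a, |h x - a| ≤ {y | 0 ≤ ρ y}.indicator (fun y => |u y - a|) x +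
        {y | ρ y ≤ 1}.indicator (fun y => |v y - a|) x) ∧
      ∫⁻ x, lipConst h x ∂μ ≤ ∫⁻ x in W, lipConst u x ∂μ + ∫⁻ x in W', lipConst v x ∂μ +
        2 * L * ∫⁻ x in {x | 0 ≤ ρ x ∧ ρ x ≤ 1}, ENNReal.ofReal |u x - v x| ∂μ := by
  have hTc : IsClosed {x | 0 ≤ ρ x ∧ ρ x ≤ 1} :=
    (isClosed_le continuous_const hρ.continuous).inter (isClosed_le hρ.continuous continuous_const)
  have huc : ContinuousOn u {x | 0 ≤ ρ x} := (hu.continuousOn hW).mono hρW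
  have hvc : ContinuousOn v {x | ρ x ≤ 1} := (hv.continuousOn hW').mono hρW'
  obtain ⟨Λ, hΛ0, hΛ⟩ := exists_four_mul_abs_sub_le huc hvc hρ.continuous hT
  have hgap := measurable_layerGap huc hvc hρ.continuous
  obtain ⟨s, hs, hsa, hsb, hlevel⟩ := exists_level_measure_le (μ := μ)
    (a := fun x => ρ x - layerGap u v ρ x / Λ)
    (hρ.continuous.measurable.sub (hgap.div_const Λ)) hρ.continuous.measurable one_half_pos
  refine ⟨transition u v ρ Λ s, locallyLipschitzOnSet_transition hW hW' hu hv hρ hρW hρW' hΛ hΛ0.le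
    hs, abs_transition_sub_le hΛ0.le ⟨hs.1, hs.2.trans one_half_lt_one⟩, ?_⟩
  refine (lintegral_lipConst_transition_le hW hW' hu hv hρ hρW hρW' hΛ hΛ0 hs hsa hsb).trans
    (add_le_add le_rfl ?_)
  simp only [sub_sub_cancel, sub_zero] at hlevel
  have htwo : (2 : ℝ≥0∞) * ENNReal.ofReal (1 / 2) = 1 := by
    rw [← ENNReal.ofReal_ofNat, ← ENNReal.ofReal_mul zero_le_two]
    norm_num
  rw [← ofReal_mul_lintegral_layerGap_div hΛ0 hTc.measurableSet]
  set B : Set X := {x | ρ x - layerGap u v ρ x / Λ < s ∧ s < ρ x}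
  calc ENNReal.ofReal Λ * L * μ B
      = 2 * L * (ENNReal.ofReal Λ * (ENNReal.ofReal (1 / 2) * μ B)) := by
        rw [← one_mul (ENNReal.ofReal Λ * L * μ B), ← htwo]
        ring
    _ ≤ _ := by gcongr

end Transition

section Subadditivity

variable {X : Type u} [PseudoMetricSpace X] {F W W' : Set X}

theorem exists_lipschitzWith_cutoff (hF : IsCompact F) (hW : IsOpen W) (hFW : F ⊆ W) :
    ∃ (L : ℝ≥0) (ρ : X → ℝ), LipschitzWith L ρ ∧ Bornology.IsBounded {x | 0 ≤ ρ x} ∧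
      (∀ x, 0 ≤ ρ x → x ∈ W) ∧ ∀ x ∈ F, 1 < ρ x := by
  obtain ⟨δ, hδ, hδW⟩ := hF.exists_thickening_subset_open hW hFW
  have hthick : {x | 0 ≤ 3 * (thickenedIndicator hδ F x : ℝ) - 1} ⊆ thickening δ F := fun x hx => by
    by_contra hxF
    rw [mem_ofPred_eq, thickenedIndicator_zero hδ F hxF] at hx
    norm_num at hx
  refine ⟨3 * δ.toNNReal⁻¹, fun x => 3 * (thickenedIndicator hδ F x : ℝ) - 1,
    LipschitzWith.of_dist_le_mul fun x y => ?_, hF.isBounded.thickening.subset hthick,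
    fun x hx => hδW (hthick hx), fun x hx => ?_⟩
  · rw [Real.dist_eq, sub_sub_sub_cancel_right, ← mul_sub, abs_mul, abs_of_pos zero_lt_three,
      NNReal.coe_mul, NNReal.coe_ofNat, mul_assoc]
    gcongr
    exact (lipschitzWith_thickenedIndicator hδ F).dist_le_mul x y
  · simp only [thickenedIndicator_one hδ F hx]
    norm_num

variable [MeasurableSpace X] [BorelSpace X] {μ : Measure X} {f u v ρ : X → ℝ} {L : ℝ≥0}

theorem aemeasurable_ofReal_abs_sub {S : Set X} (hf : AEMeasurable f μ) (hS : MeasurableSet S)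
    (hu : ContinuousOn u S) : AEMeasurable (fun x => ENNReal.ofReal |u x - f x|) (μ.restrict S) :=
  ((hu.aemeasurable hS).sub hf.restrict).norm.ennreal_ofReal

theorem exists_glue_lintegral_sub_le [ProperSpace X] [SigmaFinite μ] (hf : AEMeasurable f μ)
    (hW : IsOpen W) (hW' : IsOpen W') (hu : LocallyLipschitzOnSet u W)
    (hv : LocallyLipschitzOnSet v W') (hρ : LipschitzWith L ρ)
    (hρW : ∀ x, 0 ≤ ρ x → x ∈ W) (hρW' : ∀ x, ρ x ≤ 1 → x ∈ W')
    (hT : Bornology.IsBounded {x | 0 ≤ ρ x ∧ ρ x ≤ 1}) :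
    ∃ h : X → ℝ, LocallyLipschitzOnSet h univ ∧ (∀ x, ρ x < 0 → h x = v x) ∧
      (∀ K, ∫⁻ x in K, ENNReal.ofReal |h x - f x| ∂μ ≤
        ∫⁻ x in K ∩ {x | 0 ≤ ρ x}, ENNReal.ofReal |u x - f x| ∂μ +
          ∫⁻ x in K ∩ {x | ρ x ≤ 1}, ENNReal.ofReal |v x - f x| ∂μ) ∧
      ∫⁻ x, lipConst h x ∂μ ≤ ∫⁻ x in W, lipConst u x ∂μ + ∫⁻ x in W', lipConst v x ∂μ +
        2 * L * (∫⁻ x in {x | 0 ≤ ρ x ∧ ρ x ≤ 1}, ENNReal.ofReal |u x - f x| ∂μ +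
          ∫⁻ x in {x | 0 ≤ ρ x ∧ ρ x ≤ 1}, ENNReal.ofReal |v x - f x| ∂μ) := by
  have h0 : MeasurableSet {x | 0 ≤ ρ x} :=
    measurableSet_le measurable_const hρ.continuous.measurable
  have h1 : MeasurableSet {x | ρ x ≤ 1} :=
    measurableSet_le hρ.continuous.measurable measurable_const
  have huf := aemeasurable_ofReal_abs_sub hf h0 ((hu.continuousOn hW).mono hρW)
  obtain ⟨h, hh, hsub, hle⟩ := exists_glue (μ := μ) hW hW' hu hv hρ hρW hρW' hT
  refine ⟨h, hh, fun x hx => ?_, fun K => ?_, hle.trans ?_⟩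
  · simpa [hx, indicator_apply, sub_eq_zero, not_le.2 hx] using hsub x (v x)
  · rw [inter_comm K, inter_comm K, ← Measure.restrict_restrict h0, ← Measure.restrict_restrict h1,
      ← lintegral_indicator h0, ← lintegral_indicator h1, ← lintegral_add_left' <|
        (aemeasurable_indicator_iff h0).2 (huf.mono_measure
          (Measure.restrict_mono_measure Measure.restrict_le_self _))]
    refine lintegral_mono fun x => ?_
    refine (ENNReal.ofReal_le_ofReal (hsub x (f x))).trans (ENNReal.ofReal_add_le.trans_eq ?_)
    simp only [indicator_apply]
    split_ifs <;> simp
  · gcongr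
    rw [← lintegral_add_left' (huf.mono_measure (Measure.restrict_mono_set μ fun x hx => hx.1))]
    refine lintegral_mono fun x => ?_
    rw [← ENNReal.ofReal_add (abs_nonneg _) (abs_nonneg _), abs_sub_comm (v x)]
    exact ENNReal.ofReal_le_ofReal (abs_sub_le _ _ _)

theorem totVarOn_univ_le_add_compl [ProperSpace X] [SigmaFinite μ] (hf : AEMeasurable f μ)
    (hF : IsCompact F) (hFc : IsClosed F) (hW : IsOpen W) (hFW : F ⊆ W) :
    totVarOn μ f univ ≤ totVarOn μ f W + totVarOn μ f Fᶜ := by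
  refine ENNReal.le_of_forall_pos_le_add fun ε hε hfin => ?_
  have hε2 : (ε / 2 : ℝ≥0∞) ≠ 0 := by simpa using hε.ne'
  obtain ⟨us, hus, husf, husV⟩ :=
    exists_seq_lintegral_lipConst_le (ENNReal.add_lt_top.1 hfin).1.ne hε2
  obtain ⟨vs, hvs, hvsf, hvsV⟩ :=
    exists_seq_lintegral_lipConst_le (ENNReal.add_lt_top.1 hfin).2.ne hε2
  obtain ⟨L, ρ, hρ, hb, hρW, hρF⟩ := exists_lipschitzWith_cutoff hF hW hFW
  have hρF' : ∀ x, ρ x ≤ 1 → x ∈ Fᶜ := fun x hx hxF => (hρF x hxF).not_ge hx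
  have h0 : IsClosed {x | 0 ≤ ρ x} := isClosed_le continuous_const hρ.continuous
  have h1 : IsClosed {x | ρ x ≤ 1} := isClosed_le hρ.continuous continuous_const
  have hT : Bornology.IsBounded {x | 0 ≤ ρ x ∧ ρ x ≤ 1} := hb.subset fun x hx => hx.1
  choose hs hhs _ hhsf hhsV using fun n => exists_glue_lintegral_sub_le hf hW hFc.isOpen_compl
    (hus n) (hvs n) hρ hρW hρF' hT
  have hlim : TendstoL1loc μ hs f univ := fun K hK hKb _ => by
    refine tendsto_of_tendsto_of_tendsto_of_le_of_le tendsto_const_nhds ?_ (fun _ => zero_le)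
      fun n => hhsf n K
    simpa using (husf _ (hK.inter h0) (hKb.subset inter_subset_left) fun x hx => hρW x hx.2).add
      (hvsf _ (hK.inter h1) (hKb.subset inter_subset_left) fun x hx => hρF' x hx.2)
  have hbound : Tendsto (fun n => totVarOn μ f W + ε / 2 + (totVarOn μ f Fᶜ + ε / 2) +
      2 * L * (∫⁻ x in {x | 0 ≤ ρ x ∧ ρ x ≤ 1}, ENNReal.ofReal |us n x - f x| ∂μ +
        ∫⁻ x in {x | 0 ≤ ρ x ∧ ρ x ≤ 1}, ENNReal.ofReal |vs n x - f x| ∂μ)) atTop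
      (𝓝 (totVarOn μ f W + totVarOn μ f Fᶜ + ε)) := by
    have hgap := (husf _ (h0.inter h1) hT fun x hx => hρW x hx.1).add
      (hvsf _ (h0.inter h1) hT fun x hx => hρF' x hx.2)
    convert (ENNReal.Tendsto.const_mul (a := 2 * L) hgap (Or.inr (by finiteness))).const_add
      (totVarOn μ f W + ε / 2 + (totVarOn μ f Fᶜ + ε / 2)) using 2
    · rfl
    · rw [add_zero, mul_zero, add_zero, add_add_add_comm, ENNReal.add_halves]
  calc totVarOn μ f univ ≤ liminf (fun n => ∫⁻ x, lipConst (hs n) x ∂μ) atTop := by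
        simpa using totVarOn_le_liminf hhs hlim
    _ ≤ _ := liminf_le_liminf <| Eventually.of_forall fun n =>
        (hhsV n).trans (add_le_add (add_le_add (husV n) (hvsV n)) le_rfl)
    _ = _ := hbound.liminf_eq

end Subadditivity

theorem abs_div_sub_div_le {P P' S S' a b e σ : ℝ} (hσ : 0 < σ) (hS : σ ≤ S) (hS' : σ ≤ S')
    (ha : |P'| ≤ a) (hb : |P - P'| ≤ b) (he : |S - S'| ≤ e) :
    |P / S - P' / S'| ≤ b / σ + a * e / (σ * σ) := by
  have hS0 := hσ.trans_le hS
  have hS'0 := hσ.trans_le hS'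
  have hsplit : P / S - P' / S' = (P - P') / S - P' * (S - S') / (S * S') := by
    field_simp
    ring
  rw [hsplit]
  refine (abs_sub _ _).trans ?_
  rw [abs_div, abs_div, abs_mul, abs_of_pos hS0, abs_of_pos (mul_pos hS0 hS'0)]
  have ha0 := (abs_nonneg _).trans ha
  have hb0 := (abs_nonneg _).trans hb
  have he0 := (abs_nonneg _).trans he
  gcongr

section TentAverage

variable {X : Type u} [PseudoMetricSpace X] {r : X → ℝ} {x y z p : X}

/-- The tent of radius and height `r x` centred at `x`, as a function of `y`. -/
def tentKernel (r : X → ℝ) (x y : X) : ℝ := max 0 (r x - dist x y)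

theorem tentKernel_nonneg (r : X → ℝ) (x y : X) : 0 ≤ tentKernel r x y := le_max_left _ _

theorem tentKernel_le (hx : 0 ≤ r x) (y : X) : tentKernel r x y ≤ r x :=
  max_le hx (sub_le_self _ dist_nonneg)

theorem tentKernel_eq_zero (h : r x ≤ dist x y) : tentKernel r x y = 0 :=
  max_eq_left (sub_nonpos.2 h)

theorem abs_tentKernel_sub_tentKernel_le (hr : LipschitzWith 1 r) (x y z : X) :
    |tentKernel r x z - tentKernel r y z| ≤ 2 * dist x y := by
  unfold tentKernel
  rw [max_comm 0, max_comm 0]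
  refine (abs_max_sub_max_le_abs _ _ _).trans ?_
  rw [sub_sub_sub_comm]
  refine (abs_sub _ _).trans ?_
  rw [two_mul]
  exact add_le_add (by simpa [Real.dist_eq] using hr.dist_le_mul x y) (abs_dist_sub_le x y z)

theorem continuous_tentKernel (r : X → ℝ) (x : X) : Continuous (tentKernel r x) := by
  unfold tentKernel
  fun_prop

theorem abs_sub_le_of_mem_ball (hr : LipschitzWith 1 r) (hz : z ∈ ball p (r p / 4)) :
    |r z - r p| ≤ r p / 4 :=
  (show |r z - r p| ≤ dist z p by simpa [Real.dist_eq] using hr.dist_le_mul z p).trans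
    (mem_ball.1 hz).le

theorem tentKernel_eq_zero_of_notMem_ball (hr : LipschitzWith 1 r)
    (hz : z ∈ ball p (r p / 4)) (hy : y ∉ ball p (2 * r p)) : tentKernel r z y = 0 := by
  have hrz := (abs_le.1 (abs_sub_le_of_mem_ball hr hz)).2
  refine tentKernel_eq_zero ?_
  rw [mem_ball] at hz hy
  linarith [dist_triangle_left y p z, dist_comm z y, dist_nonneg (x := z) (y := p)]

variable [MeasurableSpace X]

/-- The average of `f` against the tents of varying radius `r`: a regularization of `f` at the
scale `r x` around `x`. -/
def tentAverage (μ : Measure X) (f r : X → ℝ) (x : X) : ℝ :=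
  (∫ y, tentKernel r x y * f y ∂μ) / ∫ y, tentKernel r x y ∂μ

variable {μ : Measure X} {f g : X → ℝ} {A : Set X}

theorem abs_setIntegral_tentKernel_mul_le (hg : IntegrableOn g A μ) (hx : 0 ≤ r x) :
    |∫ y in A, tentKernel r x y * g y ∂μ| ≤ r x * ∫ y in A, |g y| ∂μ := by
  rw [← integral_const_mul, ← Real.norm_eq_abs]
  refine norm_integral_le_of_norm_le (hg.abs.const_mul _) (Eventually.of_forall fun y => ?_)
  rw [norm_mul, Real.norm_of_nonneg (tentKernel_nonneg _ _ _), Real.norm_eq_abs]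
  gcongr
  exact tentKernel_le hx y

variable [BorelSpace X]

theorem integrableOn_tentKernel_mul (hg : IntegrableOn g A μ) (hx : 0 ≤ r x) :
    IntegrableOn (fun y => tentKernel r x y * g y) A μ :=
  hg.bdd_mul (c := r x) (continuous_tentKernel r x).aestronglyMeasurable <|
    Eventually.of_forall fun y => by
      rw [Real.norm_of_nonneg (tentKernel_nonneg _ _ _)]
      exact tentKernel_le hx y

theorem abs_setIntegral_tentKernel_mul_sub_le (hr : LipschitzWith 1 r) (hg : IntegrableOn g A μ)
    (hx : 0 ≤ r x) (hy : 0 ≤ r y) :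
    |∫ t in A, tentKernel r x t * g t ∂μ - ∫ t in A, tentKernel r y t * g t ∂μ| ≤
      2 * dist x y * ∫ t in A, |g t| ∂μ := by
  rw [← integral_sub (integrableOn_tentKernel_mul hg hx) (integrableOn_tentKernel_mul hg hy),
    ← integral_const_mul, ← Real.norm_eq_abs]
  refine norm_integral_le_of_norm_le (hg.abs.const_mul _) (Eventually.of_forall fun t => ?_)
  rw [← sub_mul, norm_mul, Real.norm_eq_abs, Real.norm_eq_abs]
  gcongr
  exact abs_tentKernel_sub_tentKernel_le hr x y t

theorem tentAverage_sub_eq (hA : ∀ y ∉ A, tentKernel r x y = 0) (hμA : μ A ≠ ⊤)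
    (hf : IntegrableOn f A μ) (hx : 0 ≤ r x) (hpos : 0 < ∫ y in A, tentKernel r x y ∂μ) (c : ℝ) :
    tentAverage μ f r x - c =
      (∫ y in A, tentKernel r x y * (f y - c) ∂μ) / ∫ y in A, tentKernel r x y ∂μ := by
  have hnum : ∫ y in A, tentKernel r x y * f y ∂μ = ∫ y, tentKernel r x y * f y ∂μ :=
    setIntegral_eq_integral_of_forall_compl_eq_zero fun y hy => by rw [hA y hy, zero_mul]
  have hden : ∫ y in A, tentKernel r x y ∂μ = ∫ y, tentKernel r x y ∂μ :=
    setIntegral_eq_integral_of_forall_compl_eq_zero hA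
  simp only [mul_sub]
  rw [integral_sub (integrableOn_tentKernel_mul hf hx)
    (integrableOn_tentKernel_mul (integrableOn_const hμA) hx), integral_mul_const, hnum,
    tentAverage, ← hden]
  field_simp

variable {Cd : ℝ≥0}

theorem IsDoublingWith.le_setIntegral_tentKernel (h : IsDoublingWith μ Cd)
    (hr : LipschitzWith 1 r) (hp : 0 < r p) (hz : z ∈ ball p (r p / 4)) :
    3 / 8 * r p * μ.real (ball p (2 * r p)) / Cd ^ 3 ≤
      ∫ y in ball p (2 * r p), tentKernel r z y ∂μ := by
  have hrz := abs_le.1 (abs_sub_le_of_mem_ball hr hz)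
  rw [mem_ball] at hz
  have hfin := h.measure_ball_lt_top
  have hinner : ball z (3 / 8 * r p) ⊆ ball p (2 * r p) := ball_subset_ball' (by linarith)
  have hdoubling : μ.real (ball p (2 * r p)) ≤ Cd ^ 3 * μ.real (ball z (3 / 8 * r p)) :=
    (measureReal_mono (ball_subset_ball' (by rw [dist_comm]; linarith)) (hfin _ _).ne).trans
      (h.measureReal_ball_pow_le z (by positivity) 3)
  have hCd : (0 : ℝ) < Cd := zero_lt_one.trans_le (by exact_mod_cast h.one_le_const p)
  have hInt : ∀ s, IntegrableOn (tentKernel r z) (ball p s) μ := fun s => by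
    simpa using integrableOn_tentKernel_mul (r := r) (x := z)
      (integrableOn_const (C := (1 : ℝ)) (hfin p s).ne) (by linarith)
  calc 3 / 8 * r p * μ.real (ball p (2 * r p)) / Cd ^ 3
      ≤ 3 / 8 * r p * μ.real (ball z (3 / 8 * r p)) := by
        rw [div_le_iff₀ (by positivity), mul_assoc _ _ ((Cd : ℝ) ^ 3), mul_comm _ ((Cd : ℝ) ^ 3)]
        gcongr
    _ = ∫ _ in ball z (3 / 8 * r p), 3 / 8 * r p ∂μ := by
        rw [setIntegral_const, smul_eq_mul, mul_comm]
    _ ≤ ∫ y in ball z (3 / 8 * r p), tentKernel r z y ∂μ := by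
        refine setIntegral_mono_on (integrableOn_const (hfin _ _).ne) ((hInt _).mono_set hinner)
          measurableSet_ball fun y hy => le_max_of_le_right ?_
        rw [mem_ball, dist_comm] at hy
        linarith
    _ ≤ ∫ y in ball p (2 * r p), tentKernel r z y ∂μ :=
        setIntegral_mono_set (hInt _) (Eventually.of_forall fun y => tentKernel_nonneg _ _ _)
          hinner.eventuallyLE

theorem abs_tentAverage_sub_le (h : IsDoublingWith μ Cd) (hr : LipschitzWith 1 r) (hp : 0 < r p)
    (hf : IntegrableOn f (ball p (2 * r p)) μ) (c : ℝ) (hz : z ∈ ball p (r p / 4)) :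
    |tentAverage μ f r z - c| ≤
      4 * Cd ^ 3 / μ.real (ball p (2 * r p)) * ∫ y in ball p (2 * r p), |f y - c| ∂μ := by
  set B := ball p (2 * r p)
  set I := ∫ y in B, |f y - c| ∂μ
  have hm : 0 < μ.real B := h.measureReal_ball_pos p (by positivity)
  have hB : μ B ≠ ⊤ := (h.measure_ball_lt_top _ _).ne
  have hfc : IntegrableOn (fun y => f y - c) B μ := hf.sub (integrableOn_const hB)
  have hCd : (0 : ℝ) < Cd := zero_lt_one.trans_le (by exact_mod_cast h.one_le_const p)
  have hrz := abs_le.1 (abs_sub_le_of_mem_ball hr hz)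
  have hS := h.le_setIntegral_tentKernel hr hp hz
  have hσ : 0 < 3 / 8 * r p * μ.real B / Cd ^ 3 := by positivity
  rw [tentAverage_sub_eq (fun y => tentKernel_eq_zero_of_notMem_ball hr hz) hB hf (by linarith)
    (hσ.trans_le hS), abs_div, abs_of_pos (hσ.trans_le hS)]
  calc |∫ y in B, tentKernel r z y * (f y - c) ∂μ| / ∫ y in B, tentKernel r z y ∂μ
      ≤ (5 / 4 * r p * I) / (3 / 8 * r p * μ.real B / Cd ^ 3) := by
        gcongr
        refine (abs_setIntegral_tentKernel_mul_le hfc (by linarith)).trans ?_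
        gcongr
        linarith
    _ = 10 / 3 * (Cd ^ 3 / μ.real B * I) := by
        field_simp
        ring
    _ ≤ 4 * (Cd ^ 3 / μ.real B * I) := by
        gcongr
        norm_num
    _ = 4 * Cd ^ 3 / μ.real B * I := by ring

theorem abs_tentAverage_sub_tentAverage_le (h : IsDoublingWith μ Cd) (hr : LipschitzWith 1 r)
    (hp : 0 < r p) (hf : IntegrableOn f (ball p (2 * r p)) μ) (c : ℝ)
    (hz : z ∈ ball p (r p / 4)) (hy : y ∈ ball p (r p / 4)) :
    |tentAverage μ f r z - tentAverage μ f r y| ≤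
      24 * Cd ^ 6 / (r p * μ.real (ball p (2 * r p))) *
        (∫ t in ball p (2 * r p), |f t - c| ∂μ) * dist z y := by
  set B := ball p (2 * r p)
  set I := ∫ y in B, |f y - c| ∂μ
  have hm : 0 < μ.real B := h.measureReal_ball_pos p (by positivity)
  have hB : μ B ≠ ⊤ := (h.measure_ball_lt_top _ _).ne
  have hfc : IntegrableOn (fun y => f y - c) B μ := hf.sub (integrableOn_const hB)
  have hCd : (1 : ℝ) ≤ Cd := by exact_mod_cast h.one_le_const p
  have hrz := abs_le.1 (abs_sub_le_of_mem_ball hr hz)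
  have hry := abs_le.1 (abs_sub_le_of_mem_ball hr hy)
  have hSz := h.le_setIntegral_tentKernel hr hp hz
  have hSy := h.le_setIntegral_tentKernel hr hp hy
  have hσ : 0 < 3 / 8 * r p * μ.real B / Cd ^ 3 := by positivity
  have hden := abs_setIntegral_tentKernel_mul_sub_le hr
    (integrableOn_const (C := (1 : ℝ)) hB) (x := z) (y := y) (by linarith) (by linarith)
  simp only [mul_one, abs_one, setIntegral_const, smul_eq_mul] at hden
  have hnum : |∫ t in B, tentKernel r y t * (f t - c) ∂μ| ≤ 5 / 4 * r p * I := by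
    refine (abs_setIntegral_tentKernel_mul_le hfc (by linarith)).trans ?_
    gcongr
    linarith
  rw [← sub_sub_sub_cancel_right _ _ c, tentAverage_sub_eq
    (fun y => tentKernel_eq_zero_of_notMem_ball hr hz) hB hf (by linarith) (hσ.trans_le hSz),
    tentAverage_sub_eq (fun t => tentKernel_eq_zero_of_notMem_ball hr hy) hB hf (by linarith)
    (hσ.trans_le hSy)]
  calc _ ≤ 2 * dist z y * I / (3 / 8 * r p * μ.real B / Cd ^ 3) +
        5 / 4 * r p * I * (2 * dist z y * μ.real B) /
          (3 / 8 * r p * μ.real B / Cd ^ 3 * (3 / 8 * r p * μ.real B / Cd ^ 3)) :=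
        abs_div_sub_div_le hσ hSz hSy hnum
          (abs_setIntegral_tentKernel_mul_sub_le hr hfc (by linarith) (by linarith)) hden
    _ = (16 / 3 * Cd ^ 3 + 160 / 9 * Cd ^ 6) * (I * dist z y / (r p * μ.real B)) := by
        field_simp
        ring
    _ ≤ (16 / 3 * Cd ^ 6 + 160 / 9 * Cd ^ 6) * (I * dist z y / (r p * μ.real B)) := by
        gcongr
        norm_num
    _ ≤ 24 * Cd ^ 6 * (I * dist z y / (r p * μ.real B)) := by
        gcongr
        nlinarith [pow_pos (zero_lt_one.trans_le hCd) 6]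
    _ = 24 * Cd ^ 6 / (r p * μ.real B) * I * dist z y := by ring

end TentAverage

section TentAverageEstimates

variable {X : Type u} [PseudoMetricSpace X] [MeasurableSpace X] [BorelSpace X]
  {μ : Measure X} {Cd : ℝ≥0} {f r : X → ℝ} {p : X}

theorem exists_lipschitzOnWith_tentAverage (h : IsDoublingWith μ Cd) (hr : LipschitzWith 1 r)
    (hp : 0 < r p) (hf : IntegrableOn f (ball p (2 * r p)) μ) :
    ∃ L : ℝ≥0, ∃ s ∈ 𝓝 p, LipschitzOnWith L (tentAverage μ f r) s := by
  refine ⟨Real.toNNReal (24 * Cd ^ 6 / (r p * μ.real (ball p (2 * r p))) *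
    ∫ t in ball p (2 * r p), |f t - 0| ∂μ), ball p (r p / 4), ball_mem_nhds p (by positivity),
    LipschitzOnWith.of_dist_le_mul fun x hx y hy => ?_⟩
  rw [Real.dist_eq]
  refine (abs_tentAverage_sub_tentAverage_le h hr hp hf 0 hx hy).trans ?_
  gcongr
  exact Real.le_coe_toNNReal _

theorem lipConst_tentAverage_le (h : IsDoublingWith μ Cd) (hr : LipschitzWith 1 r)
    (hp : 0 < r p) (hf : IntegrableOn f (ball p (2 * r p)) μ) (c : ℝ) :
    lipConst (tentAverage μ f r) p ≤
      ENNReal.ofReal (24 * Cd ^ 6 / (r p * μ.real (ball p (2 * r p)))) *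
        ∫⁻ y in ball p (2 * r p), ENNReal.ofReal |f y - c| ∂μ := by
  have hfc : IntegrableOn (fun y => f y - c) (ball p (2 * r p)) μ :=
    hf.sub (integrableOn_const (h.measure_ball_lt_top _ _).ne)
  rw [← ofReal_integral_eq_lintegral_ofReal hfc.abs (Eventually.of_forall fun _ => abs_nonneg _),
    ← ENNReal.ofReal_mul (by positivity)]
  refine lipConst_le_of_eventually (by positivity) ?_
  filter_upwards [ball_mem_nhds p (show 0 < r p / 4 by positivity)] with y hy
  exact abs_tentAverage_sub_tentAverage_le h hr hp hf c hy (mem_ball_self (by positivity))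

theorem lintegral_abs_tentAverage_sub_le (h : IsDoublingWith μ Cd) (hr : LipschitzWith 1 r)
    (hp : 0 < r p) (hf : IntegrableOn f (ball p (2 * r p)) μ) (c : ℝ) :
    ∫⁻ x in ball p (r p / 4), ENNReal.ofReal |tentAverage μ f r x - f x| ∂μ ≤
      5 * Cd ^ 3 * ∫⁻ y in ball p (2 * r p), ENNReal.ofReal |f y - c| ∂μ := by
  set B := ball p (2 * r p)
  have hB : μ B ≠ ⊤ := (h.measure_ball_lt_top _ _).ne
  have hfc : IntegrableOn (fun y => f y - c) B μ := hf.sub (integrableOn_const hB)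
  set I := ∫ y in B, |f y - c| ∂μ
  have hI : ENNReal.ofReal I = ∫⁻ y in B, ENNReal.ofReal |f y - c| ∂μ :=
    ofReal_integral_eq_lintegral_ofReal hfc.abs (Eventually.of_forall fun _ => abs_nonneg _)
  have hsub : ball p (r p / 4) ⊆ B := ball_subset_ball (by linarith)
  have hm : 0 < μ.real B := h.measureReal_ball_pos p (by positivity)
  have hCd : (1 : ℝ≥0∞) ≤ Cd := by exact_mod_cast h.one_le_const p
  have hbound : ∀ x ∈ ball p (r p / 4), ENNReal.ofReal |tentAverage μ f r x - f x| ≤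
      ENNReal.ofReal (4 * Cd ^ 3 / μ.real B * I) + ENNReal.ofReal |f x - c| := fun x hx => by
    rw [← ENNReal.ofReal_add (by positivity) (abs_nonneg _)]
    refine ENNReal.ofReal_le_ofReal ((abs_sub_le _ c _).trans ?_)
    rw [abs_sub_comm c]
    gcongr
    exact abs_tentAverage_sub_le h hr hp hf c hx
  have hconst : ENNReal.ofReal (4 * Cd ^ 3 / μ.real B * I) * μ (ball p (r p / 4)) ≤
      4 * Cd ^ 3 * ENNReal.ofReal I := by
    refine (mul_le_mul_right (measure_mono hsub) _).trans (le_of_eq ?_)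
    rw [← ENNReal.ofReal_toReal hB, ← ENNReal.ofReal_mul (by positivity), ← Measure.real,
      show 4 * (Cd : ℝ) ^ 3 / μ.real B * I * μ.real B = (4 * Cd ^ 3 : ℝ≥0) * I by
        push_cast; field_simp,
      ENNReal.ofReal_mul (by positivity), ENNReal.ofReal_coe_nnreal]
    push_cast
    rfl
  calc ∫⁻ x in ball p (r p / 4), ENNReal.ofReal |tentAverage μ f r x - f x| ∂μ
      ≤ ENNReal.ofReal (4 * Cd ^ 3 / μ.real B * I) * μ (ball p (r p / 4)) +
          ∫⁻ x in ball p (r p / 4), ENNReal.ofReal |f x - c| ∂μ := by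
        rw [← setLIntegral_const, ← lintegral_add_left measurable_const]
        exact setLIntegral_mono' measurableSet_ball hbound
    _ ≤ 4 * Cd ^ 3 * ENNReal.ofReal I + Cd ^ 3 * ENNReal.ofReal I := by
        gcongr
        exact (lintegral_mono_set hsub).trans (hI.ge.trans
          (le_mul_of_one_le_left' (one_le_pow₀ hCd)))
    _ = 5 * Cd ^ 3 * ∫⁻ y in B, ENNReal.ofReal |f y - c| ∂μ := by
        rw [hI]
        ring

end TentAverageEstimates

section TentAverageBV

variable {X : Type u} [MetricSpace X] [MeasurableSpace X] [BorelSpace X]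
  {μ : Measure X} {Cd : ℝ≥0} {CP : ℝ} {f r : X → ℝ} {A : Set X} {p : X}

theorem SupportsPoincare.lipConst_tentAverage_le (hP : SupportsPoincare μ CP)
    (h : IsDoublingWith μ Cd) (hr : LipschitzWith 1 r) (hp : 0 < r p)
    (hf : IntegrableOn f (ball p (2 * r p)) μ) (hV : totVarOn μ f A ≠ ⊤)
    (hA : closedBall p (2 * r p) ⊆ A) :
    lipConst (tentAverage μ f r) p ≤
      48 * Cd ^ 6 * ENNReal.ofReal CP * (totVarOn μ f A / μ (ball p (2 * r p))) := by
  have hm : 0 < μ.real (ball p (2 * r p)) := h.measureReal_ball_pos p (by positivity)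
  have hμ : ENNReal.ofReal (μ.real (ball p (2 * r p))) = μ (ball p (2 * r p)) :=
    ENNReal.ofReal_toReal (h.measure_ball_lt_top _ _).ne
  refine (_root_.lipConst_tentAverage_le h hr hp hf _).trans <| (mul_le_mul_right
    (hP.lintegral_sub_setAverage_le_totVarOn hV (by positivity)
      (h.measure_ball_lt_top _ _).ne hf hA) _).trans (le_of_eq ?_)
  rw [← mul_assoc, ← ENNReal.ofReal_mul (by positivity),
    show 24 * (Cd : ℝ) ^ 6 / (r p * μ.real (ball p (2 * r p))) * (CP * (2 * r p)) =
      (48 * Cd ^ 6 : ℝ≥0) / μ.real (ball p (2 * r p)) * CP by push_cast; field_simp; ring,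
    ENNReal.ofReal_mul (by positivity), ENNReal.ofReal_div_of_pos hm, hμ,
    ENNReal.ofReal_coe_nnreal, div_eq_mul_inv, div_eq_mul_inv]
  push_cast
  ring

theorem SupportsPoincare.lintegral_abs_tentAverage_sub_le (hP : SupportsPoincare μ CP)
    (h : IsDoublingWith μ Cd) (hr : LipschitzWith 1 r) (hp : 0 < r p)
    (hf : IntegrableOn f (ball p (2 * r p)) μ) (hV : totVarOn μ f A ≠ ⊤)
    (hA : closedBall p (2 * r p) ⊆ A) :
    ∫⁻ x in ball p (r p / 4), ENNReal.ofReal |tentAverage μ f r x - f x| ∂μ ≤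
      10 * Cd ^ 3 * ENNReal.ofReal CP * ENNReal.ofReal (r p) * totVarOn μ f A := by
  refine (_root_.lintegral_abs_tentAverage_sub_le h hr hp hf _).trans <| (mul_le_mul_right
    (hP.lintegral_sub_setAverage_le_totVarOn hV (by positivity)
      (h.measure_ball_lt_top _ _).ne hf hA) _).trans (le_of_eq ?_)
  rw [mul_comm CP, ENNReal.ofReal_mul (by positivity), ENNReal.ofReal_mul zero_le_two,
    ENNReal.ofReal_ofNat]
  ring

end TentAverageBV

theorem IsDoublingWith.div_measure_ball_le {X : Type u} [PseudoMetricSpace X] [MeasurableSpace X]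
    {μ : Measure X} {Cd : ℝ≥0} (h : IsDoublingWith μ Cd) {x p : X} {r s : ℝ} (hr : 0 < r) {n : ℕ}
    (hsub : ball x s ⊆ ball p (2 ^ n * r)) (v : ℝ≥0∞) :
    v / μ (ball p r) ≤ Cd ^ n * (v / μ (ball x s)) := by
  have hCd : (Cd : ℝ≥0∞) ^ n ≠ 0 :=
    pow_ne_zero _ (ENNReal.coe_ne_zero.2 (zero_lt_one.trans_le (h.one_le_const p)).ne')
  have hCd' : (Cd : ℝ≥0∞) ^ n ≠ ⊤ := ENNReal.pow_ne_top ENNReal.coe_ne_top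
  rw [← ENNReal.mul_div_mul_left v _ hCd hCd', ← mul_div_assoc]
  gcongr
  exact (measure_mono hsub).trans (h.measure_ball_pow_le p hr n)

section RadialTentAverage

/-- The half-open dyadic shell `2 ^ j ≤ d(x, x₀) < 2 ^ (j + 1)`. -/
def dyadicShell {X : Type u} [PseudoMetricSpace X] (x₀ : X) (j : ℕ) : Set X :=
  {x | 2 ^ j ≤ dist x x₀ ∧ dist x x₀ < 2 * 2 ^ j}

/-- The tent average of `f` at a scale comparable to the distance from `x₀`: a locally Lipschitz
approximation of `f` far away from `x₀`. The factor `8` keeps the averaging balls centred in a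
`dyadicShell` inside the corresponding `dyadicAnnulus`. -/
def radialTentAverage {X : Type u} [PseudoMetricSpace X] [MeasurableSpace X] (μ : Measure X)
    (f : X → ℝ) (x₀ : X) : X → ℝ :=
  tentAverage μ f fun x => dist x x₀ / 8

section Pseudo

variable {X : Type u} [PseudoMetricSpace X] {x₀ p : X} {j : ℕ}

theorem lipschitzWith_dist_div_eight (x₀ : X) : LipschitzWith 1 fun x => dist x x₀ / 8 :=
  LipschitzWith.of_dist_le_mul fun x y => by
    rw [Real.dist_eq, ← sub_div, abs_div, abs_of_pos (by norm_num : (0 : ℝ) < 8), NNReal.coe_one,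
      one_mul]
    linarith [abs_dist_sub_le x y x₀, dist_nonneg (x := x) (y := y)]

theorem closedBall_subset_dyadicAnnulus (hp : p ∈ dyadicShell x₀ j) :
    closedBall p (2 * (dist p x₀ / 8)) ⊆ dyadicAnnulus x₀ j := fun y hy => by
  have hpy := abs_le.1 ((abs_dist_sub_le y p x₀).trans hy)
  obtain ⟨hp1, hp2⟩ := hp
  constructor <;> linarith [pow_pos (zero_lt_two (α := ℝ)) j]

theorem dyadicShell_subset_ball (x₀ : X) (j : ℕ) : dyadicShell x₀ j ⊆ ball x₀ (2 * 2 ^ j) :=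
  fun _ hx => hx.2

theorem setOf_pow_le_dist_subset_iUnion_dyadicShell (x₀ : X) (k : ℕ) :
    {x | (2 : ℝ) ^ k ≤ dist x x₀} ⊆ ⋃ i, dyadicShell x₀ (i + k) := by
  intro x hx
  have hx1 : 1 ≤ dist x x₀ / 2 ^ k := (one_le_div (by positivity)).2 hx
  obtain ⟨n, hn1, hn2⟩ := exists_nat_pow_near hx1 one_lt_two
  rw [le_div_iff₀ (by positivity), ← pow_add] at hn1
  rw [div_lt_iff₀ (by positivity), ← pow_add, add_right_comm, pow_succ'] at hn2
  exact mem_iUnion.2 ⟨n, hn1, hn2⟩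

theorem measurableSet_dyadicShell [MeasurableSpace X] [BorelSpace X] (x₀ : X) (j : ℕ) :
    MeasurableSet (dyadicShell x₀ j) := by
  have hdist : Measurable fun x => dist x x₀ := (continuous_id.dist continuous_const).measurable
  exact (measurableSet_le measurable_const hdist).inter (measurableSet_lt hdist measurable_const)

end Pseudo

theorem integrableOn_ball_of_locallyIntegrable {X : Type u} [PseudoMetricSpace X] [ProperSpace X]
    [MeasurableSpace X] {μ : Measure X} {f : X → ℝ} (hf : LocallyIntegrable f μ) (x : X) (r : ℝ) :
    IntegrableOn f (ball x r) μ :=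
  (hf.integrableOn_isCompact (isCompact_closedBall x r)).mono_set ball_subset_closedBall

theorem exists_lipschitzOnWith_radialTentAverage {X : Type u} [PseudoMetricSpace X]
    [ProperSpace X] [MeasurableSpace X] [BorelSpace X] {μ : Measure X} {Cd : ℝ≥0}
    (h : IsDoublingWith μ Cd) {f : X → ℝ} (hf : LocallyIntegrable f μ) {x₀ p : X}
    (hp : 0 < dist p x₀) :
    ∃ L : ℝ≥0, ∃ s ∈ 𝓝 p, LipschitzOnWith L (radialTentAverage μ f x₀) s :=
  exists_lipschitzOnWith_tentAverage h (lipschitzWith_dist_div_eight x₀) (by positivity)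
    (integrableOn_ball_of_locallyIntegrable hf _ _)

namespace SupportsPoincare

variable {X : Type u} [MetricSpace X] [ProperSpace X] [MeasurableSpace X] [BorelSpace X]
  {μ : Measure X} {Cd : ℝ≥0} {CP : ℝ} {f : X → ℝ}

theorem lipConst_radialTentAverage_le (hP : SupportsPoincare μ CP) (h : IsDoublingWith μ Cd)
    (hf : LocallyIntegrable f μ) (hV : totVarOn μ f univ ≠ ⊤) {x₀ p : X} {j : ℕ}
    (hp : p ∈ dyadicShell x₀ j) :
    lipConst (radialTentAverage μ f x₀) p ≤ 48 * Cd ^ 10 * ENNReal.ofReal CP *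
      (totVarOn μ f (dyadicAnnulus x₀ j) / μ (ball x₀ (2 * 2 ^ j))) := by
  have hp0 : 0 < dist p x₀ := lt_of_lt_of_le (by positivity) hp.1
  have hsub : ball x₀ (2 * 2 ^ j) ⊆ ball p (2 ^ 4 * (2 * (dist p x₀ / 8))) :=
    ball_subset_ball' (by rw [dist_comm]; linarith [hp.1])
  refine (hP.lipConst_tentAverage_le h (lipschitzWith_dist_div_eight x₀) (by positivity)
    (integrableOn_ball_of_locallyIntegrable hf _ _)
    (ne_top_of_le_ne_top hV (totVarOn_mono (subset_univ _)))
    (closedBall_subset_dyadicAnnulus hp)).trans ?_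
  refine (mul_le_mul_right (h.div_measure_ball_le (by positivity) hsub _) _).trans (le_of_eq ?_)
  ring

theorem exists_forall_lipConst_radialTentAverage_le (hP : SupportsPoincare μ CP)
    (h : IsDoublingWith μ Cd) (hf : LocallyIntegrable f μ) (hV : totVarOn μ f univ ≠ ⊤) (x₀ : X) :
    ∃ L : ℝ≥0, ∀ p, 1 ≤ dist p x₀ → lipConst (radialTentAverage μ f x₀) p ≤ L := by
  set K := 48 * Cd ^ 6 * ENNReal.ofReal CP * (Cd ^ 3 * (totVarOn μ f univ / μ (ball x₀ 1)))
  have hK : K ≠ ⊤ := by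
    have := (h.measure_ball_pos x₀ one_pos).ne'
    finiteness
  refine ⟨K.toNNReal, fun p hp => ?_⟩
  rw [ENNReal.coe_toNNReal hK]
  refine (hP.lipConst_tentAverage_le h (lipschitzWith_dist_div_eight x₀) (by positivity)
    (integrableOn_ball_of_locallyIntegrable hf _ _) hV (subset_univ _)).trans
    (mul_le_mul_right (h.div_measure_ball_le (by positivity) (ball_subset_ball' ?_) _) _)
  rw [dist_comm]
  linarith

theorem lintegral_dyadicShell_lipConst_radialTentAverage_le (hP : SupportsPoincare μ CP)
    (h : IsDoublingWith μ Cd) (hf : LocallyIntegrable f μ) (hV : totVarOn μ f univ ≠ ⊤)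
    (x₀ : X) (j : ℕ) :
    ∫⁻ x in dyadicShell x₀ j, lipConst (radialTentAverage μ f x₀) x ∂μ ≤
      48 * Cd ^ 10 * ENNReal.ofReal CP * totVarOn μ f (dyadicAnnulus x₀ j) := by
  refine (setLIntegral_mono' (measurableSet_dyadicShell x₀ j) fun x hx =>
    hP.lipConst_radialTentAverage_le h hf hV hx).trans ?_
  rw [setLIntegral_const, mul_assoc]
  gcongr
  rw [ENNReal.mul_comm_div]
  exact mul_le_of_le_one_right' <| (ENNReal.div_le_div_right
    (measure_mono (dyadicShell_subset_ball x₀ j)) _).trans ENNReal.div_self_le_one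

theorem lintegral_lipConst_radialTentAverage_le (hP : SupportsPoincare μ CP)
    (h : IsDoublingWith μ Cd) (hf : LocallyIntegrable f μ) (hV : totVarOn μ f univ ≠ ⊤)
    (x₀ : X) (k : ℕ) :
    ∫⁻ x in {x | 2 ^ k ≤ dist x x₀}, lipConst (radialTentAverage μ f x₀) x ∂μ ≤
      48 * Cd ^ 10 * ENNReal.ofReal CP * ∑' i, totVarOn μ f (dyadicAnnulus x₀ (i + k)) := by
  rw [← ENNReal.tsum_mul_left]
  exact (lintegral_mono_set (setOf_pow_le_dist_subset_iUnion_dyadicShell x₀ k)).trans <|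
    (lintegral_iUnion_le _ _).trans <| ENNReal.tsum_le_tsum fun i =>
      hP.lintegral_dyadicShell_lipConst_radialTentAverage_le h hf hV x₀ (i + k)

theorem lintegral_dyadicShell_abs_radialTentAverage_sub_le (hP : SupportsPoincare μ CP)
    (h : IsDoublingWith μ Cd) (hf : LocallyIntegrable f μ) (hV : totVarOn μ f univ ≠ ⊤)
    (x₀ : X) (j : ℕ) :
    ∫⁻ x in dyadicShell x₀ j, ENNReal.ofReal |radialTentAverage μ f x₀ x - f x| ∂μ ≤
      10 * Cd ^ 13 * ENNReal.ofReal CP * ENNReal.ofReal (2 ^ j) *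
        totVarOn μ f (dyadicAnnulus x₀ j) := by
  have h2j : (0 : ℝ) < 2 ^ j := by positivity
  obtain ⟨t, ht, hcard, hcover⟩ := h.exists_finset_subset_iUnion_closedBall (ε := 2 ^ j / 64)
    (n := 10) ((dyadicShell_subset_ball x₀ j).trans ball_subset_closedBall) (by positivity)
    (by linarith)
  set D := 10 * Cd ^ 3 * ENNReal.ofReal CP * ENNReal.ofReal (2 ^ j) *
    totVarOn μ f (dyadicAnnulus x₀ j)
  have hball : ∀ p ∈ t, ∫⁻ x in closedBall p (2 ^ j / 64),
      ENNReal.ofReal |radialTentAverage μ f x₀ x - f x| ∂μ ≤ D := fun p hpt => by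
    have hp := ht hpt
    have hp0 : 0 < dist p x₀ := h2j.trans_le hp.1
    refine (lintegral_mono_set (closedBall_subset_ball (by linarith [hp.1]))).trans <|
      (hP.lintegral_abs_tentAverage_sub_le h (lipschitzWith_dist_div_eight x₀)
        (by positivity) (integrableOn_ball_of_locallyIntegrable hf _ _)
        (ne_top_of_le_ne_top hV (totVarOn_mono (subset_univ _)))
        (closedBall_subset_dyadicAnnulus hp)).trans ?_
    unfold D
    gcongr
    linarith [hp.2]
  calc ∫⁻ x in dyadicShell x₀ j, ENNReal.ofReal |radialTentAverage μ f x₀ x - f x| ∂μ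
      ≤ ∑' p : t, ∫⁻ x in closedBall (p : X) (2 ^ j / 64),
          ENNReal.ofReal |radialTentAverage μ f x₀ x - f x| ∂μ :=
        (lintegral_mono_set (hcover.trans_eq (biUnion_eq_iUnion _ _))).trans
          (lintegral_iUnion_le _ _)
    _ ≤ ∑' _ : t, D := ENNReal.tsum_le_tsum fun p => hball p p.2
    _ ≤ Cd ^ 10 * D := by
        rw [tsum_fintype, Finset.sum_const, nsmul_eq_mul, Finset.card_univ, Fintype.card_coe]
        gcongr
    _ = 10 * Cd ^ 13 * ENNReal.ofReal CP * ENNReal.ofReal (2 ^ j) *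
          totVarOn μ f (dyadicAnnulus x₀ j) := by
        unfold D
        ring

end SupportsPoincare

end RadialTentAverage

section LipschitzApproximation

variable {X : Type u} [PseudoMetricSpace X] {w f : X → ℝ} {x₀ : X} {R : ℝ}

theorem IsGeodesic.exists_lipschitzWith_of_lipConst_le_of_lt_dist {g : X → ℝ} {L : ℝ≥0}
    (hX : IsGeodesic X) (hg : LocallyLipschitzOnSet g univ)
    (hL : ∀ x, R < dist x x₀ → lipConst g x ≤ L) :
    ∃ M : ℝ≥0, LipschitzWith M g := by
  obtain ⟨N, hN⟩ := hg (closedBall x₀ (R + 1)) isClosed_closedBall isBounded_closedBall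
    (subset_univ _)
  refine ⟨max L N, hX.lipschitzWith_of_lipConst_le hg fun x => ?_⟩
  rcases lt_or_ge R (dist x x₀) with hx | hx
  · exact (hL x hx).trans (ENNReal.coe_le_coe.2 (le_max_left L N))
  · exact (lipConst_le_of_lipschitzOnWith
      (closedBall_mem_nhds_of_mem (mem_ball.2 (hx.trans_lt (lt_add_one R)))) hN).trans
      (ENNReal.coe_le_coe.2 (le_max_right L N))

theorem exists_lipschitzWith_radial_transition (x₀ : X) (hR : 0 < R) :
    ∃ ρ : X → ℝ, LipschitzWith (2 / R).toNNReal ρ ∧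
      (∀ x, 0 ≤ ρ x ↔ dist x x₀ ≤ 7 / 4 * R) ∧ (∀ x, ρ x ≤ 1 ↔ 5 / 4 * R ≤ dist x x₀) := by
  refine ⟨fun x => 2 / R * (7 / 4 * R - dist x x₀), LipschitzWith.of_le_add_mul _ fun x y => ?_,
    fun x => ?_, fun x => ?_⟩
  · rw [Real.coe_toNNReal _ (by positivity), ← mul_add]
    exact mul_le_mul_of_nonneg_left (by linarith [dist_triangle_left y x₀ x]) (by positivity)
  · rw [mul_nonneg_iff_of_pos_left (by positivity), sub_nonneg]
  · beta_reduce
    rw [div_mul_eq_mul_div, div_le_one hR]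
    constructor <;> intro <;> linarith

theorem exists_locallyLipschitz_eq_outside_ball [ProperSpace X] [MeasurableSpace X]
    [BorelSpace X] {μ : Measure X} [SigmaFinite μ] {ε : ℝ≥0∞}
    (hf : AEMeasurable f μ) (hR : 0 < R) (hV : totVarOn μ f (ball x₀ (2 * R)) ≠ ⊤)
    (hw : LocallyLipschitzOnSet w {x | R < dist x x₀}) (hε : ε ≠ 0) :
    ∃ g : X → ℝ, LocallyLipschitzOnSet g univ ∧ (∀ x, 7 / 4 * R < dist x x₀ → g x = w x) ∧
      ∫⁻ x in closedBall x₀ R, ENNReal.ofReal |g x - f x| ∂μ ≤ ε ∧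
      ∫⁻ x, lipConst g x ∂μ ≤ totVarOn μ f (ball x₀ (2 * R)) + ε +
        ∫⁻ x in {x | R < dist x x₀}, lipConst w x ∂μ +
        2 * ENNReal.ofReal (2 / R) *
          ∫⁻ x in {x | R ≤ dist x x₀ ∧ dist x x₀ < 2 * R}, ENNReal.ofReal |w x - f x| ∂μ := by
  set L : ℝ≥0 := (2 / R).toNNReal
  obtain ⟨ρ, hρL, hρ0, hρ1⟩ := exists_lipschitzWith_radial_transition x₀ hR
  set δ := ε / (1 + 2 * L)
  have hδ : δ ≠ 0 := (ENNReal.div_pos hε (by finiteness)).ne'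
  have hδε : (1 + 2 * L) * δ ≤ ε := ENNReal.mul_div_le
  obtain ⟨u, hu, huf, hulip⟩ := exists_lintegral_sub_le_lintegral_lipConst_le hV
    isClosed_closedBall isBounded_closedBall
    (closedBall_subset_ball (by linarith : 7 / 4 * R < 2 * R)) hδ
  obtain ⟨g, hg, hgw, hgf, hglip⟩ := exists_glue_lintegral_sub_le hf isOpen_ball
    (isOpen_lt continuous_const (continuous_id.dist continuous_const)) hu hw hρL
    (fun x hx => mem_ball.2 (((hρ0 x).1 hx).trans_lt (by linarith)))
    (fun x hx => (by linarith : R < 5 / 4 * R).trans_le ((hρ1 x).1 hx))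
    (isBounded_closedBall.subset fun x hx => mem_closedBall.2 ((hρ0 x).1 hx.1))
  refine ⟨g, hg, fun x hx => hgw x (not_le.1 fun h => hx.not_ge ((hρ0 x).1 h)), ?_, ?_⟩
  · have hempty : closedBall x₀ R ∩ {x | ρ x ≤ 1} = ∅ := by
      refine eq_empty_of_forall_notMem fun x hx => ?_
      linarith [mem_closedBall.1 hx.1, (hρ1 x).1 hx.2]
    refine (hgf _).trans ?_
    rw [hempty, Measure.restrict_empty, lintegral_zero_measure, add_zero]
    exact (lintegral_mono_set fun x hx => mem_closedBall.2 ((hρ0 x).1 hx.2)).trans <|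
      huf.trans <| (le_mul_of_one_le_left' le_self_add).trans hδε
  · calc ∫⁻ x, lipConst g x ∂μ
        ≤ (totVarOn μ f (ball x₀ (2 * R)) + δ) + ∫⁻ x in {x | R < dist x x₀}, lipConst w x ∂μ +
          2 * L * (δ + ∫⁻ x in {x | R ≤ dist x x₀ ∧ dist x x₀ < 2 * R},
            ENNReal.ofReal |w x - f x| ∂μ) := by
          refine hglip.trans ?_
          refine add_le_add (add_le_add_left hulip _)
            (mul_le_mul_right (add_le_add ?_ (lintegral_mono_set fun x hx => ?_)) _)
          · exact (lintegral_mono_set fun x hx => mem_closedBall.2 ((hρ0 x).1 hx.1)).trans huf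
          · exact ⟨by linarith [(hρ1 x).1 hx.2], by linarith [(hρ0 x).1 hx.1]⟩
      _ = totVarOn μ f (ball x₀ (2 * R)) + (1 + 2 * L) * δ +
          ∫⁻ x in {x | R < dist x x₀}, lipConst w x ∂μ +
          2 * L * ∫⁻ x in {x | R ≤ dist x x₀ ∧ dist x x₀ < 2 * R},
            ENNReal.ofReal |w x - f x| ∂μ := by ring
      _ ≤ _ := by gcongr; exact le_rfl

end LipschitzApproximation

section LipschitzSequence

variable {X : Type u} [MetricSpace X] [ProperSpace X] [MeasurableSpace X] [BorelSpace X]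
  {μ : Measure X} {Cd : ℝ≥0} {CP : ℝ} {f : X → ℝ}

theorem SupportsPoincare.two_mul_lintegral_dyadicShell_abs_radialTentAverage_sub_le
    (hP : SupportsPoincare μ CP) (h : IsDoublingWith μ Cd) (hf : LocallyIntegrable f μ)
    (hV : totVarOn μ f univ ≠ ⊤) (x₀ : X) (j : ℕ) :
    2 * ENNReal.ofReal (2 / 2 ^ j) *
        ∫⁻ x in dyadicShell x₀ j, ENNReal.ofReal |radialTentAverage μ f x₀ x - f x| ∂μ ≤
      40 * Cd ^ 13 * ENNReal.ofReal CP * totVarOn μ f (dyadicAnnulus x₀ j) := by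
  have hscale : ENNReal.ofReal (2 / 2 ^ j) * ENNReal.ofReal (2 ^ j) = 2 := by
    rw [← ENNReal.ofReal_mul (by positivity), div_mul_cancel₀ _ (by positivity),
      ENNReal.ofReal_ofNat]
  calc _ ≤ 2 * ENNReal.ofReal (2 / 2 ^ j) * (10 * Cd ^ 13 * ENNReal.ofReal CP *
          ENNReal.ofReal (2 ^ j) * totVarOn μ f (dyadicAnnulus x₀ j)) := by
        gcongr
        exact hP.lintegral_dyadicShell_abs_radialTentAverage_sub_le h hf hV x₀ j
    _ = 20 * (ENNReal.ofReal (2 / 2 ^ j) * ENNReal.ofReal (2 ^ j)) * Cd ^ 13 *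
          ENNReal.ofReal CP * totVarOn μ f (dyadicAnnulus x₀ j) := by ring
    _ = _ := by
        rw [hscale]
        ring

theorem SupportsPoincare.exists_lipschitzWith_lintegral_lipConst_le
    [IsFiniteMeasureOnCompacts μ] (hX : IsGeodesic X) (hP : SupportsPoincare μ CP)
    (h : IsDoublingWith μ Cd) (hf : LocallyIntegrable f μ) (hV : totVarOn μ f univ ≠ ⊤)
    (x₀ : X) (k : ℕ) {ε : ℝ≥0∞} (hε : ε ≠ 0) :
    ∃ g : X → ℝ, (∃ L : ℝ≥0, LipschitzWith L g) ∧
      ∫⁻ x in closedBall x₀ (2 ^ k), ENNReal.ofReal |g x - f x| ∂μ ≤ ε ∧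
      ∫⁻ x, lipConst g x ∂μ ≤ totVarOn μ f (ball x₀ (2 * 2 ^ k)) + ε +
        (48 * Cd ^ 10 + 40 * Cd ^ 13) * ENNReal.ofReal CP *
          ∑' i, totVarOn μ f (dyadicAnnulus x₀ (i + k)) := by
  have hR : (0 : ℝ) < 2 ^ k := by positivity
  set w := radialTentAverage μ f x₀
  have hw : LocallyLipschitzOnSet w {x | 2 ^ k < dist x x₀} :=
    .of_exists_mem_nhds fun p hp =>
      exists_lipschitzOnWith_radialTentAverage h hf (hR.trans hp)
  obtain ⟨L, hL⟩ := hP.exists_forall_lipConst_radialTentAverage_le h hf hV x₀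
  obtain ⟨g, hg, hgw, hgf, hglip⟩ := exists_locallyLipschitz_eq_outside_ball
    hf.aestronglyMeasurable.aemeasurable hR
    (ne_top_of_le_ne_top hV (totVarOn_mono (subset_univ _))) hw hε
  have hgL : ∀ x, 7 / 4 * 2 ^ k < dist x x₀ → lipConst g x ≤ L := fun x hx => by
    have hgw_nhds : g =ᶠ[𝓝 x] w := by
      filter_upwards [continuousAt_id.dist continuousAt_const |>.eventually_const_lt hx] with y hy
      exact hgw y hy
    rw [lipConst_congr_of_eventuallyEq hgw_nhds]
    exact hL x (by linarith [one_le_pow₀ (M₀ := ℝ) one_le_two (n := k)])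
  refine ⟨g, hX.exists_lipschitzWith_of_lipConst_le_of_lt_dist hg hgL, hgf, hglip.trans ?_⟩
  set A := ∑' i, totVarOn μ f (dyadicAnnulus x₀ (i + k))
  have hlip : ∫⁻ x in {x | 2 ^ k < dist x x₀}, lipConst w x ∂μ ≤
      48 * Cd ^ 10 * ENNReal.ofReal CP * A :=
    (lintegral_mono_set fun x (hx : 2 ^ k < dist x x₀) => hx.le).trans
      (hP.lintegral_lipConst_radialTentAverage_le h hf hV x₀ k)
  have hVA : totVarOn μ f (dyadicAnnulus x₀ k) ≤ A := by
    simpa only [zero_add] using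
      ENNReal.le_tsum (f := fun i => totVarOn μ f (dyadicAnnulus x₀ (i + k))) 0
  rw [add_mul, add_mul, ← add_assoc]
  exact add_le_add (add_le_add_right hlip _) <|
    (hP.two_mul_lintegral_dyadicShell_abs_radialTentAverage_sub_le h hf hV x₀ k).trans
      (mul_le_mul_right hVA _)

theorem SupportsPoincare.exists_lipschitz_tendstoL1loc_lintegral_lipConst_le
    [IsFiniteMeasureOnCompacts μ] (hX : IsGeodesic X) (hP : SupportsPoincare μ CP)
    (h : IsDoublingWith μ Cd) (hf : LocallyIntegrable f μ) (hV : totVarOn μ f univ ≠ ⊤) (x₀ : X) :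
    ∃ (u : ℕ → X → ℝ) (e : ℕ → ℝ≥0∞), (∀ k, ∃ L : ℝ≥0, LipschitzWith L (u k)) ∧
      TendstoL1loc μ u f univ ∧ Tendsto e atTop (𝓝 0) ∧
      ∀ k, ∫⁻ x, lipConst (u k) x ∂μ ≤ totVarOn μ f (ball x₀ (2 * 2 ^ k)) + e k := by
  choose u hu huf hulip using fun k : ℕ =>
    hP.exists_lipschitzWith_lintegral_lipConst_le hX h hf hV x₀ k
      (ENNReal.inv_ne_zero.2 (ENNReal.natCast_ne_top k))
  have htail := ENNReal.tendsto_sum_nat_add (fun j => totVarOn μ f (dyadicAnnulus x₀ j))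
    (ne_top_of_le_ne_top (by finiteness) (tsum_totVarOn_dyadicAnnulus_le x₀))
  have he := ENNReal.tendsto_inv_nat_nhds_zero.add <|
    ENNReal.Tendsto.const_mul (a := (48 * Cd ^ 10 + 40 * Cd ^ 13) * ENNReal.ofReal CP) htail
      (Or.inr (by finiteness))
  rw [mul_zero, add_zero] at he
  exact ⟨u, _, hu, tendstoL1loc_univ_of_le x₀ (tendsto_pow_atTop_atTop_of_one_lt one_lt_two)
    ENNReal.tendsto_inv_nat_nhds_zero huf, he, fun k => (hulip k).trans_eq (add_assoc _ _ _)⟩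

end LipschitzSequence

section Limits

variable {ι : Type*} {l : Filter ι} {a : ℝ≥0∞} {s b e : ι → ℝ≥0∞}

theorem tendsto_of_le_liminf_of_le_add (he : Tendsto e l (𝓝 0)) (hs : ∀ i, s i ≤ a + e i)
    (h : a ≤ liminf s l) : Tendsto s l (𝓝 a) := by
  rcases l.eq_or_neBot with rfl | _
  · exact tendsto_bot
  refine tendsto_of_le_liminf_of_limsup_le h ?_
  calc limsup s l ≤ limsup (fun i => a + e i) l := limsup_le_limsup (Eventually.of_forall hs)
    _ = a := by simpa using (tendsto_const_nhds.add he).limsup_eq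

theorem tendsto_of_tendsto_of_le_add (hs : Tendsto s l (𝓝 a)) (he : Tendsto e l (𝓝 0))
    (hsb : ∀ i, s i ≤ b i + e i) (hb : ∀ i, b i ≤ a) : Tendsto b l (𝓝 a) := by
  refine tendsto_of_tendsto_of_tendsto_of_le_of_le (g := fun i => s i - e i) ?_
    tendsto_const_nhds (fun i => tsub_le_iff_right.2 (hsb i)) hb
  simpa only [tsub_zero] using ENNReal.Tendsto.sub hs he (Or.inr ENNReal.zero_ne_top)

theorem limsup_add_liminf_le_limsup_add [NeBot l] (s b : ι → ℝ≥0∞) :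
    limsup s l + liminf b l ≤ limsup (fun i => s i + b i) l := by
  rw [liminf_eq, ENNReal.add_sSup ⟨0, Eventually.of_forall fun _ => zero_le⟩]
  refine iSup₂_le fun c hc => ?_
  rw [← limsup_add_const l s c (by isBoundedDefault) (by isBoundedDefault)]
  exact limsup_le_limsup (hc.mono fun i hi => add_le_add_right hi _)

end Limits

section ClosedSets

variable {X : Type u} [PseudoMetricSpace X] [MeasurableSpace X] [BorelSpace X]
  {μ : Measure X} {f : X → ℝ} {us : ℕ → X → ℝ}

theorem limsup_setLIntegral_lipConst_add_totVarOn_compl_le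
    (hu : ∀ k, LocallyLipschitzOnSet (us k) univ) (hlim : TendstoL1loc μ us f univ)
    (hsup : limsup (fun k => ∫⁻ x, lipConst (us k) x ∂μ) atTop ≤ totVarOn μ f univ)
    {C : Set X} (hC : IsClosed C) :
    limsup (fun k => ∫⁻ x in C, lipConst (us k) x ∂μ) atTop + totVarOn μ f Cᶜ ≤
      totVarOn μ f univ :=
  calc _ ≤ limsup (fun k => ∫⁻ x in C, lipConst (us k) x ∂μ) atTop +
        liminf (fun k => ∫⁻ x in Cᶜ, lipConst (us k) x ∂μ) atTop := by
        gcongr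
        exact totVarOn_le_liminf (fun k => (hu k).mono (subset_univ _))
          (hlim.mono (subset_univ _))
    _ ≤ limsup (fun k => ∫⁻ x, lipConst (us k) x ∂μ) atTop := by
        simpa only [lintegral_add_compl _ hC.measurableSet] using
          limsup_add_liminf_le_limsup_add (l := atTop)
            (fun k => ∫⁻ x in C, lipConst (us k) x ∂μ) (fun k => ∫⁻ x in Cᶜ, lipConst (us k) x ∂μ)
    _ ≤ _ := hsup

theorem limsup_setLIntegral_lipConst_le_of_isCompact [ProperSpace X] [SigmaFinite μ]
    (hf : AEMeasurable f μ) (hV : totVarOn μ f univ ≠ ⊤)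
    (hu : ∀ k, LocallyLipschitzOnSet (us k) univ) (hlim : TendstoL1loc μ us f univ)
    (hsup : limsup (fun k => ∫⁻ x, lipConst (us k) x ∂μ) atTop ≤ totVarOn μ f univ)
    {K W : Set X} (hK : IsCompact K) (hKc : IsClosed K) (hW : IsOpen W) (hKW : K ⊆ W) :
    limsup (fun k => ∫⁻ x in K, lipConst (us k) x ∂μ) atTop ≤ totVarOn μ f W :=
  (ENNReal.add_le_add_iff_right (ne_top_of_le_ne_top hV (totVarOn_mono (subset_univ Kᶜ)))).1 <|
    (limsup_setLIntegral_lipConst_add_totVarOn_compl_le hu hlim hsup hKc).trans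
      (totVarOn_univ_le_add_compl hf hK hKc hW hKW)

theorem exists_eventually_setLIntegral_lipConst_compl_ball_le (hV : totVarOn μ f univ ≠ ⊤)
    (hu : ∀ k, LocallyLipschitzOnSet (us k) univ) (hlim : TendstoL1loc μ us f univ)
    (hsup : limsup (fun k => ∫⁻ x, lipConst (us k) x ∂μ) atTop ≤ totVarOn μ f univ)
    {x₀ : X} {r : ℕ → ℝ}
    (htight : Tendsto (fun n => totVarOn μ f (ball x₀ (r n))) atTop (𝓝 (totVarOn μ f univ)))
    {ε : ℝ≥0∞} (hε : ε ≠ 0) :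
    ∃ R, ∀ᶠ k in atTop, ∫⁻ x in (ball x₀ R)ᶜ, lipConst (us k) x ∂μ ≤ ε := by
  have hdefect : Tendsto (fun n => totVarOn μ f univ - totVarOn μ f (ball x₀ (r n))) atTop
      (𝓝 0) := by
    simpa only [tsub_self] using ENNReal.Tendsto.sub tendsto_const_nhds htight (Or.inl hV)
  obtain ⟨n, hn⟩ := (hdefect.eventually_lt_const (pos_iff_ne_zero.2 hε)).exists
  refine ⟨r n, (eventually_lt_of_limsup_lt (lt_of_le_of_lt ?_ hn)).mono fun k hk => hk.le⟩
  refine ENNReal.le_sub_of_add_le_right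
    (ne_top_of_le_ne_top hV (totVarOn_mono (subset_univ _))) ?_
  simpa only [compl_compl] using limsup_setLIntegral_lipConst_add_totVarOn_compl_le hu hlim hsup
    (isOpen_ball (x := x₀) (ε := r n)).isClosed_compl

theorem limsup_setLIntegral_lipConst_le_totVarSet [ProperSpace X] [SigmaFinite μ]
    (hf : AEMeasurable f μ) (hV : totVarOn μ f univ ≠ ⊤)
    (hu : ∀ k, LocallyLipschitzOnSet (us k) univ) (hlim : TendstoL1loc μ us f univ)
    (hsup : limsup (fun k => ∫⁻ x, lipConst (us k) x ∂μ) atTop ≤ totVarOn μ f univ)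
    {x₀ : X} {r : ℕ → ℝ}
    (htight : Tendsto (fun n => totVarOn μ f (ball x₀ (r n))) atTop (𝓝 (totVarOn μ f univ)))
    {F : Set X} (hF : IsClosed F) :
    limsup (fun k => ∫⁻ x in F, lipConst (us k) x ∂μ) atTop ≤ totVarSet μ f F := by
  refine le_iInf fun W => le_iInf₂ fun hW hFW => ENNReal.le_of_forall_pos_le_add fun ε hε _ => ?_
  obtain ⟨R, hR⟩ := exists_eventually_setLIntegral_lipConst_compl_ball_le hV hu hlim hsup htight
    (ENNReal.coe_ne_zero.2 hε.ne')
  have hsplit : ∀ᶠ k in atTop, ∫⁻ x in F, lipConst (us k) x ∂μ ≤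
      ∫⁻ x in F ∩ closedBall x₀ R, lipConst (us k) x ∂μ + ε := hR.mono fun k hk =>
    calc ∫⁻ x in F, lipConst (us k) x ∂μ
        ≤ ∫⁻ x in F ∩ closedBall x₀ R ∪ (ball x₀ R)ᶜ, lipConst (us k) x ∂μ :=
          lintegral_mono_set fun x hx => or_iff_not_imp_right.2 fun hxR =>
            ⟨hx, ball_subset_closedBall (not_notMem.1 hxR)⟩
      _ ≤ _ := (lintegral_union_le _ _ _).trans (add_le_add_right hk _)
  refine (limsup_le_limsup hsplit).trans ?_
  rw [limsup_add_const atTop _ (ε : ℝ≥0∞) (by isBoundedDefault) (by isBoundedDefault)]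
  gcongr
  exact limsup_setLIntegral_lipConst_le_of_isCompact hf hV hu hlim hsup
    ((isCompact_closedBall x₀ R).inter_left hF) (hF.inter isClosed_closedBall) hW
    (inter_subset_left.trans hFW)

end ClosedSets

theorem statement13 {X : Type u} [MetricSpace X] [MeasurableSpace X] [BorelSpace X]
    (μ : Measure X) (Cd : ℝ≥0) (CP : ℝ) (hCd : 1 ≤ Cd) (hCP : 0 < CP)
    (hX : GoodSpace X μ Cd CP)
    (f : X → ℝ) (hf : IsBV μ f) :
    ∃ fk : ℕ → X → ℝ,
      (∀ k, ∃ L : ℝ≥0, LipschitzWith L (fk k)) ∧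
      TendstoL1loc μ fk f Set.univ ∧
      Tendsto (fun k => ∫⁻ x, lipConst (fk k) x ∂μ) atTop
        (𝓝 (totVarOn μ f Set.univ)) ∧
      (∀ U : Set X, IsOpen U →
        totVarOn μ f U ≤
          Filter.liminf (fun k => ∫⁻ x in U, lipConst (fk k) x ∂μ) atTop) ∧
      (∀ F : Set X, IsClosed F →
        Filter.limsup (fun k => ∫⁻ x in F, lipConst (fk k) x ∂μ) atTop ≤
          totVarSet μ f F) := by
  obtain ⟨hne, hcomplete, hgeo, hdoub, hpoin⟩ := hX
  obtain ⟨hfl, hVtop⟩ := hf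
  have hV := hVtop.ne
  have hproper : ProperSpace X := hdoub.properSpace
  have hfinite : IsFiniteMeasureOnCompacts μ := hdoub.isFiniteMeasureOnCompacts
  obtain ⟨x₀⟩ := hne.to_nonempty
  obtain ⟨u, e, hLip, hlim, he, hle⟩ :=
    hpoin.exists_lipschitz_tendstoL1loc_lintegral_lipConst_le hgeo hdoub hfl hV x₀
  have hloc k : LocallyLipschitzOnSet (u k) univ :=
    (hLip k).elim fun _ hL => .of_lipschitzWith hL univ
  have hopen (U : Set X) : totVarOn μ f U ≤
      liminf (fun k => ∫⁻ x in U, lipConst (u k) x ∂μ) atTop :=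
    totVarOn_le_liminf (fun k => (hloc k).mono (subset_univ U)) (hlim.mono (subset_univ U))
  have hball k : totVarOn μ f (ball x₀ (2 * 2 ^ k)) ≤ totVarOn μ f univ :=
    totVarOn_mono (subset_univ _)
  have henergy : Tendsto (fun k => ∫⁻ x, lipConst (u k) x ∂μ) atTop (𝓝 (totVarOn μ f univ)) :=
    tendsto_of_le_liminf_of_le_add he (fun k => (hle k).trans (add_le_add_left (hball k) _))
      (by simpa only [setLIntegral_univ] using hopen univ)
  have htight := tendsto_of_tendsto_of_le_add henergy he hle hball
  exact ⟨u, hLip, hlim, henergy, fun U _ => hopen U, fun F hF =>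
    limsup_setLIntegral_lipConst_le_totVarSet hfl.aestronglyMeasurable.aemeasurable hV hloc hlim
      henergy.limsup_eq.le htight hF⟩

end
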